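/- arXiv:1512.07602 — 2 statements merged into one kernel-verified Lean document; each statement's English description precedes it below -/
import Mathlib

section
/- For any integer k ≥ 1 and any r ∈ (0,1) there exists a constant D = D(k,r) > 1 with the following property. Let V, V' be Banach spaces, A ∈ L(V,V'), and E a k-dimensional subspace of V such that E ∩ ker A = {0} and det(A|E) ≥ r V_k(A). Then there exist a closed k-codimensional subspace F ⊆ V complementing E and a closed k-codimensional subspace F' ⊆ V' complementing E' := AE such that: (1) A F ⊆ F'; (2) ‖π_{E//F}‖ ≤ D and ‖π_{E'//F'}‖ ≤ D; and (3) ‖A|_F‖ ≤ D c_{k+1}(A). -/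
/-!
The constants come from comparing the volume determinant `det(A|E)` with ordinary matrix
determinants in Auerbach coordinates.

Take Auerbach bases `e` of `E` and `w` of `E' = A E`, and extend the coordinate functionals of `w`
to functionals `ℓ i` on `W` of norm at most one by Hahn–Banach. Set `F' = ⋂ ker (ℓ i)` and
`F = A⁻¹ F'`; the projection onto `E'` along `F'` has norm at most `k`. Let `P i j = ℓ i (A (e j))`
be the matrix of `A|_E`. Comparing unit balls with cubes and cross-polytopes gives
`det(A|E) ≤ k ^ k |det P|` (`detOn_le_det`) and, for unit vectors `g j` and unit functionals `φ i`,
`|det (φ i (A (g j)))| ≤ k ^ k V_k(A)` (`abs_det_le_volGrowth`). Hence near-maximality of `E` says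
that replacing one `e j` by a vector `v`, and the functionals by any unit functionals, raises
`|det P|` at most by the factor `M ‖v‖` with `M = k ^ (2 k) / r` (`abs_det_update_le`). This is used
twice.

* With the functionals `ℓ`, Cramer's rule bounds the coordinates of the projection onto `E` along
  `F` by `M`.
* With `v ∈ F` in column `i` and a norming functional of `A v` in row `m`, the determinant equals
  `‖A v‖` times a cofactor of `P`, so `‖A v‖ |P⁻¹ i m| ≤ M ‖v‖`. Thus `A` stretches every vector of
  `E` at least as much as any vector of `F`, up to the factor `k ^ 2 M`.

For the Gelfand number, let `G` have codimension `k` and `0 ≠ v ∈ F`. The `(k + 1)`-dimensional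
space `E ⊕ ℝ v` meets `G` in some `g ≠ 0`; the stretching estimate and the bounded projection onto
`E'` show `‖A g‖ ≥ c ‖A v‖ ‖g‖ / ‖v‖`, so `‖A|_F‖` is bounded by a constant times `‖A|_G‖`
(`restrNorm_le_of_codim`).
-/

open Metric Filter MeasureTheory Topology

noncomputable section

section Defs

variable {V W : Type*} [NormedAddCommGroup V] [NormedSpace ℝ V]
  [NormedAddCommGroup W] [NormedSpace ℝ W]

/-- The operator norm of the restriction of `A` to the subspace `E`, `‖A|_E‖`. -/
noncomputable def restrNorm (A : V →L[ℝ] W) (E : Submodule ℝ V) : ℝ :=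
  ‖A.comp E.subtypeL‖

/-- The minimal norm `m(A|_E) = inf {‖A v‖ : v ∈ E, ‖v‖ = 1}`. -/
noncomputable def minNorm (A : V →L[ℝ] W) (E : Submodule ℝ V) : ℝ :=
  sInf {r : ℝ | ∃ v ∈ E, ‖v‖ = 1 ∧ r = ‖A v‖}

/-- `F` is a closed subspace of codimension `n`. -/
def ClosedCodim (F : Submodule ℝ V) (n : ℕ) : Prop :=
  IsClosed (F : Set V) ∧ FiniteDimensional ℝ (V ⧸ F) ∧ Module.finrank ℝ (V ⧸ F) = n

/-- The `k`-th Gelfand number of `A` (meaningful for `k ≥ 1`):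
`c_k(A) = inf {‖A|_F‖ : F a closed subspace of codimension k - 1}`. -/
noncomputable def gelfand (k : ℕ) (A : V →L[ℝ] W) : ℝ :=
  sInf {r : ℝ | ∃ F : Submodule ℝ V, ClosedCodim F (k - 1) ∧ r = restrNorm A F}

/-- The unit sphere of a subspace. -/
def subSphere (E : Submodule ℝ V) : Set V := {v : V | v ∈ E ∧ ‖v‖ = 1}

/-- Hausdorff distance between the unit spheres of two subspaces. -/
noncomputable def dHaus (E F : Submodule ℝ V) : ℝ :=
  Metric.hausdorffDist (subSphere E) (subSphere F)

/-- `π` is the (bounded) projection onto `E` parallel to `F`. -/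
def IsProjOn (π : V →L[ℝ] V) (E F : Submodule ℝ V) : Prop :=
  (∀ v ∈ E, π v = v) ∧ (∀ v ∈ F, π v = 0)

open scoped Classical in
/-- The (unsigned) determinant `det(A|E)` of `A` restricted to a finite-dimensional
subspace `E`, defined as the ratio of the induced (Haar) volume of the image `A B_E`
of the unit ball of `E` to that of the unit ball of `A E`; it equals `0` when `A|_E`
is not injective.  (The value of the ratio does not depend on the choice of linear
equivalence with `ℝ^k`, since any two such differ by a linear automorphism, which
rescales both volumes by the same factor.) -/
noncomputable def detOn (A : V →L[ℝ] W) (E : Submodule ℝ V) : ℝ :=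
  if h : Nonempty ((↥(E.map A.toLinearMap)) ≃ₗ[ℝ] (Fin (Module.finrank ℝ ↥E) → ℝ)) then
    (volume (⇑h.some '' {w : ↥(E.map A.toLinearMap) | ∃ v ∈ E, ‖v‖ ≤ 1 ∧ A v = (w : W)})).toReal /
      (volume (⇑h.some '' {w : ↥(E.map A.toLinearMap) | ‖(w : W)‖ ≤ 1})).toReal
  else 0

/-- `V_k(A)`: the maximal `k`-dimensional volume growth of `A`,
`V_k(A) = sup {det(A|E) : E ⊆ V a k-dimensional subspace}`. -/
noncomputable def volGrowth (k : ℕ) (A : V →L[ℝ] W) : ℝ :=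
  sSup {r : ℝ | ∃ E : Submodule ℝ V, FiniteDimensional ℝ ↥E ∧ Module.finrank ℝ ↥E = k ∧
    r = detOn A E}

/-- `V_k(A|_G)`: maximal volume growth among `k`-dimensional subspaces of `G`. -/
noncomputable def volGrowthOn (k : ℕ) (A : V →L[ℝ] W) (G : Submodule ℝ V) : ℝ :=
  sSup {r : ℝ | ∃ E : Submodule ℝ V, E ≤ G ∧ FiniteDimensional ℝ ↥E ∧
    Module.finrank ℝ ↥E = k ∧ r = detOn A E}

/-- `A : X × ℕ → L(V)` is a linear cocycle over `T`. -/
def IsCocycle {X : Type*} (T : X → X) (A : X → ℕ → (V →L[ℝ] V)) : Prop :=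
  (∀ x, A x 0 = 1) ∧ ∀ x n m, A x (n + m) = (A (T^[m] x) n).comp (A x m)

/-- Continuity of a subspace-valued map with respect to the Hausdorff distance
between unit spheres. -/
def SubContinuous {X : Type*} [TopologicalSpace X] (𝓔 : X → Submodule ℝ V) : Prop :=
  ∀ x : X, ∀ ε > (0 : ℝ), ∀ᶠ y in nhds x, dHaus (𝓔 x) (𝓔 y) < ε

end Defs

end

section Aux

/-! ### Auerbach bases -/

/-- **Auerbach's lemma**: a finite-dimensional normed space has a basis of vectors of norm at most
one whose coordinate functionals also have norm at most one. It is found by maximizing a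
determinant over tuples in the unit ball; the bound on the coordinates is Cramer's rule. -/
theorem exists_auerbach {X : Type*} [NormedAddCommGroup X] [NormedSpace ℝ X]
    [FiniteDimensional ℝ X] {k : ℕ} (hk : Module.finrank ℝ X = k) :
    ∃ b : Module.Basis (Fin k) ℝ X, (∀ i, ‖b i‖ ≤ 1) ∧ ∀ x i, |b.repr x i| ≤ ‖x‖ := by
  have : ProperSpace X := FiniteDimensional.proper ℝ X
  let b0 : Module.Basis (Fin k) ℝ X := Module.finBasisOfFinrankEq ℝ X hk
  have hcont : Continuous fun v : Fin k → X => |b0.det v| := by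
    have h : ∀ v : Fin k → X, b0.det v = Matrix.det (fun i j => b0.coord i (v j)) := by
      intro v
      rw [Module.Basis.det_apply]
      rfl
    simp_rw [h]
    refine (Continuous.matrix_det ?_).abs
    refine continuous_pi fun i => continuous_pi fun j => ?_
    exact (LinearMap.continuous_of_finiteDimensional (b0.coord i)).comp (continuous_apply j)
  obtain ⟨v, hvK, hvmax⟩ := (isCompact_closedBall (0 : Fin k → X) 1).exists_isMaxOn
    ⟨0, by simp⟩ hcont.continuousOn
  have hvn : ∀ i, ‖v i‖ ≤ 1 := fun i =>
    (norm_le_pi_norm v i).trans (by simpa using hvK)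
  have hmax : ∀ u : Fin k → X, (∀ i, ‖u i‖ ≤ 1) → |b0.det u| ≤ |b0.det v| := by
    intro u hu
    refine hvmax ?_
    simpa using (pi_norm_le_iff_of_nonneg zero_le_one).2 hu
  have hpos : 0 < |b0.det v| := by
    set c : ℝ := (1 + ‖(b0 : Fin k → X)‖)⁻¹ with hc
    have hc0 : 0 < c := by positivity
    have h1 := hmax (fun i => c • b0 i) (by
      intro i
      rw [norm_smul, Real.norm_of_nonneg hc0.le, hc, inv_mul_le_iff₀ (by positivity)]
      have := norm_le_pi_norm (b0 : Fin k → X) i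
      linarith)
    have h2 : b0.det (fun i => c • b0 i) = c ^ k := by
      have := (b0.det).map_smul_univ (fun _ : Fin k => c) b0
      rw [this, b0.det_self]
      simp
    rw [h2] at h1
    refine lt_of_lt_of_le ?_ h1
    positivity
  have hunit : IsUnit (b0.det v) := isUnit_iff_ne_zero.2 (abs_pos.1 hpos)
  obtain ⟨hli, hsp⟩ := (Module.Basis.is_basis_iff_det b0).2 hunit
  let b : Module.Basis (Fin k) ℝ X := Module.Basis.mk hli hsp.ge
  have hb : (b : Fin k → X) = v := Module.Basis.coe_mk _ _
  -- Cramer's rule, relative to `b0`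
  have hcr : ∀ x i, b0.det (Function.update v i x) = b0.det v * b.repr x i := by
    intro x i
    have h1 : b0.det = b0.det b • b.det := AlternatingMap.eq_smul_basis_det b b0.det
    have h2 : b.det (Function.update v i x) = b.repr x i := by
      rw [Module.Basis.det_apply, ← hb, Module.Basis.toMatrix_update, Module.Basis.toMatrix_self,
        ← Matrix.cramer_apply, Matrix.cramer_one]
      rfl
    rw [h1, AlternatingMap.smul_apply, h2, AlternatingMap.smul_apply, ← hb, b.det_self]
    simp
  have hle : ∀ x i, ‖x‖ ≤ 1 → |b.repr x i| ≤ 1 := by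
    intro x i hx
    have h1 := hmax (Function.update v i x) (by
      intro j
      by_cases h : j = i
      · subst h; simpa using hx
      · simpa [h] using hvn j)
    rw [hcr, abs_mul] at h1
    exact le_of_mul_le_mul_left (by simpa using h1) hpos
  refine ⟨b, fun i => by rw [hb]; exact hvn i, fun x i => ?_⟩
  by_cases hx : x = 0
  · simp [hx]
  have hx' : 0 < ‖x‖ := norm_pos_iff.2 hx
  have := hle (‖x‖⁻¹ • x) i (by rw [norm_smul]; simp [hx])
  rw [map_smul, Finsupp.smul_apply, smul_eq_mul, abs_mul, abs_of_pos (inv_pos.2 hx'),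
    inv_mul_le_iff₀ hx'] at this
  simpa using this

/-! ### Volume determinants versus matrix determinants -/

variable {V W : Type*} [NormedAddCommGroup V] [NormedSpace ℝ V]
  [NormedAddCommGroup W] [NormedSpace ℝ W]

/-- The volume ratio may be computed in any linear coordinates on `A E`, not only in those picked
by choice in `detOn`. -/
theorem detOn_eq {k : ℕ} (A : V →L[ℝ] W) (E : Submodule ℝ V) (hk : Module.finrank ℝ E = k)
    (T : ↥(E.map A.toLinearMap) ≃ₗ[ℝ] (Fin k → ℝ)) :
    detOn A E =
      (volume (T '' {w : ↥(E.map A.toLinearMap) | ∃ v ∈ E, ‖v‖ ≤ 1 ∧ A v = (w : W)})).toReal /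
      (volume (T '' {w : ↥(E.map A.toLinearMap) | ‖(w : W)‖ ≤ 1})).toReal := by
  subst hk
  have h : Nonempty (↥(E.map A.toLinearMap) ≃ₗ[ℝ] (Fin (Module.finrank ℝ E) → ℝ)) := ⟨T⟩
  rw [detOn, dif_pos h]
  let Q := T.symm.trans h.some
  have hQ : ∀ S : Set ↥(E.map A.toLinearMap),
      volume (h.some '' S) = ENNReal.ofReal |LinearMap.det (Q : (Fin (Module.finrank ℝ E) → ℝ) →ₗ[ℝ] _)| * volume (T '' S) := by
    intro S
    rw [← Measure.addHaar_image_linearMap, Set.image_image]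
    simp [Q]
  have hd : |LinearMap.det (Q : (Fin (Module.finrank ℝ E) → ℝ) →ₗ[ℝ] _)| ≠ 0 :=
    abs_ne_zero.2 (LinearEquiv.isUnit_det' Q).ne_zero
  rw [hQ, hQ, ENNReal.toReal_mul, ENNReal.toReal_mul, ENNReal.toReal_ofReal (abs_nonneg _),
    mul_div_mul_left _ _ hd]

theorem volume_ball_lt_top {k : ℕ} (A : V →L[ℝ] W) (E : Submodule ℝ V)
    (T : ↥(E.map A.toLinearMap) ≃ₗ[ℝ] (Fin k → ℝ)) :
    volume (T '' {w : ↥(E.map A.toLinearMap) | ‖(w : W)‖ ≤ 1}) < ⊤ := by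
  have : FiniteDimensional ℝ ↥(E.map A.toLinearMap) := T.symm.finiteDimensional
  have : ProperSpace ↥(E.map A.toLinearMap) := FiniteDimensional.proper ℝ _
  have h : {w : ↥(E.map A.toLinearMap) | ‖(w : W)‖ ≤ 1} = closedBall 0 1 := by
    ext w; simp
  rw [h]
  exact ((isCompact_closedBall _ _).image
    (LinearMap.continuous_of_finiteDimensional T.toLinearMap)).measure_lt_top

/-- The image of the unit ball of `E` lies in `‖A‖ + 1` times the unit ball of `A E`. -/
theorem volume_image_le {k : ℕ} (A : V →L[ℝ] W) (E : Submodule ℝ V)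
    (T : ↥(E.map A.toLinearMap) ≃ₗ[ℝ] (Fin k → ℝ)) :
    volume (T '' {w : ↥(E.map A.toLinearMap) | ∃ v ∈ E, ‖v‖ ≤ 1 ∧ A v = (w : W)}) ≤
      ENNReal.ofReal ((‖A‖ + 1) ^ k) *
        volume (T '' {w : ↥(E.map A.toLinearMap) | ‖(w : W)‖ ≤ 1}) := by
  have h0 : 0 < ‖A‖ + 1 := by positivity
  have := Measure.addHaar_smul (volume : Measure (Fin k → ℝ)) (‖A‖ + 1)
    (T '' {w : ↥(E.map A.toLinearMap) | ‖(w : W)‖ ≤ 1})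
  rw [Module.finrank_fin_fun, abs_of_pos (by positivity)] at this
  rw [← this]
  refine measure_mono ?_
  rintro _ ⟨w, ⟨v, hv, hv1, hvw⟩, rfl⟩
  refine Set.mem_smul_set.2 ⟨T ((‖A‖ + 1)⁻¹ • w), ⟨_, ?_, rfl⟩, ?_⟩
  · have : ‖(w : W)‖ ≤ ‖A‖ + 1 := by
      rw [← hvw]
      refine (A.le_opNorm v).trans ?_
      nlinarith [norm_nonneg A, norm_nonneg v]
    simp only [Set.mem_ofPred_eq, Submodule.coe_smul, norm_smul, norm_inv, Real.norm_of_nonneg h0.le]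
    rw [inv_mul_le_iff₀ h0]; simpa using this
  · rw [map_smul, smul_smul, mul_inv_cancel₀ h0.ne', one_smul]

/-- The set of determinants is bounded above, so the real supremum `volGrowth` is genuine. -/
theorem detOn_le_volGrowth {k : ℕ} (A : V →L[ℝ] W) (E : Submodule ℝ V)
    [hE : FiniteDimensional ℝ E] (hk : Module.finrank ℝ E = k) :
    detOn A E ≤ volGrowth k A := by
  refine le_csSup ⟨(‖A‖ + 1) ^ k, ?_⟩ ⟨E, hE, hk, rfl⟩
  rintro _ ⟨E, hE, rfl, rfl⟩
  by_cases h : Nonempty (↥(E.map A.toLinearMap) ≃ₗ[ℝ] (Fin (Module.finrank ℝ E) → ℝ))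
  · obtain ⟨T⟩ := h
    rw [detOn_eq A E rfl T]
    refine div_le_of_le_mul₀ ENNReal.toReal_nonneg (by positivity) ?_
    refine (ENNReal.toReal_mono (ENNReal.mul_ne_top ENNReal.ofReal_ne_top
      (volume_ball_lt_top A E T).ne) (volume_image_le A E T)).trans ?_
    rw [ENNReal.toReal_mul, ENNReal.toReal_ofReal (by positivity)]
  · rw [detOn, dif_neg h]; positivity

theorem volume_toLin_ball {k : ℕ} (P : Matrix (Fin k) (Fin k) ℝ) {s : ℝ} (hs : 0 ≤ s) :
    volume ((fun t => P.mulVec t) '' closedBall (0 : Fin k → ℝ) s) =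
      ENNReal.ofReal (|P.det| * (2 * s) ^ k) := by
  have := Measure.addHaar_image_linearMap (volume : Measure (Fin k → ℝ)) (Matrix.toLin' P)
    (closedBall 0 s)
  rw [LinearMap.det_toLin', Real.volume_pi_closedBall _ hs, Fintype.card_fin,
    ← ENNReal.ofReal_mul (abs_nonneg _)] at this
  rw [← this]
  rfl

/-- In Auerbach coordinates `e` on `E` and `w` on `A E`, the volume determinant is at most `k ^ k`
times the determinant of the matrix of `A|_E`. -/
theorem detOn_le_det {k : ℕ} (hk0 : 1 ≤ k) (A : V →L[ℝ] W) (E : Submodule ℝ V)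
    (e : Module.Basis (Fin k) ℝ E) (he : ∀ x i, |e.repr x i| ≤ ‖x‖)
    (w : Module.Basis (Fin k) ℝ ↥(E.map A.toLinearMap)) (hw : ∀ i, ‖w i‖ ≤ 1)
    (P : Matrix (Fin k) (Fin k) ℝ)
    (hP : ∀ i j, P i j = w.repr ⟨A (e j), Submodule.mem_map_of_mem (e j).2⟩ i) :
    detOn A E ≤ k ^ k * |P.det| := by
  have hk : Module.finrank ℝ E = k := by simp [Module.finrank_eq_card_basis e]
  have hkr : (0 : ℝ) < k := by exact_mod_cast hk0
  rw [detOn_eq A E hk w.equivFun]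
  have h1 : volume (w.equivFun '' {x : ↥(E.map A.toLinearMap) | ∃ v ∈ E, ‖v‖ ≤ 1 ∧ A v = (x : W)})
      ≤ ENNReal.ofReal (|P.det| * (2 * 1) ^ k) := by
    rw [← volume_toLin_ball P zero_le_one]
    refine measure_mono ?_
    rintro _ ⟨x, ⟨v, hv, hv1, hvx⟩, rfl⟩
    refine ⟨e.equivFun ⟨v, hv⟩, ?_, ?_⟩
    · rw [mem_closedBall_zero_iff, pi_norm_le_iff_of_nonneg zero_le_one]
      intro i
      exact (he ⟨v, hv⟩ i).trans hv1
    · have hx : x = ∑ j, e.equivFun ⟨v, hv⟩ j •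
          (⟨A (e j), Submodule.mem_map_of_mem (e j).2⟩ : ↥(E.map A.toLinearMap)) := by
        apply Subtype.ext
        have hs := congrArg (fun y : E => A (y : V)) (e.sum_equivFun ⟨v, hv⟩)
        simp only [Submodule.coe_sum, Submodule.coe_smul, map_sum, map_smul] at hs ⊢
        rw [← hvx, ← hs]
      ext i
      conv_rhs => rw [hx]
      simp only [map_sum, map_smul, Finset.sum_apply, Pi.smul_apply, smul_eq_mul,
        Matrix.mulVec, dotProduct, hP, Module.Basis.equivFun_apply]
      exact Finset.sum_congr rfl fun j _ => mul_comm _ _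
  have h2 : ENNReal.ofReal ((2 * (1 / k : ℝ)) ^ k) ≤
      volume (w.equivFun '' {x : ↥(E.map A.toLinearMap) | ‖(x : W)‖ ≤ 1}) := by
    have := Real.volume_pi_closedBall (0 : Fin k → ℝ) (r := 1 / k) (by positivity)
    rw [Fintype.card_fin] at this
    rw [← this]
    refine measure_mono ?_
    intro t ht
    rw [mem_closedBall_zero_iff, pi_norm_le_iff_of_nonneg (by positivity)] at ht
    refine ⟨w.equivFun.symm t, ?_, w.equivFun.apply_symm_apply t⟩
    change ‖w.equivFun.symm t‖ ≤ 1
    rw [Module.Basis.equivFun_symm_apply]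
    calc ‖∑ i, t i • w i‖ ≤ ∑ i : Fin k, (1 / k : ℝ) := by
          refine norm_sum_le_of_le _ fun i _ => ?_
          rw [norm_smul]
          calc ‖t i‖ * ‖w i‖ ≤ (1 / k) * 1 :=
                mul_le_mul (ht i) (hw i) (norm_nonneg _) (by positivity)
            _ = _ := mul_one _
      _ = 1 := by simp [hkr.ne']
  have h1' := ENNReal.toReal_mono ENNReal.ofReal_ne_top h1
  have h2' := ENNReal.toReal_mono (volume_ball_lt_top A E w.equivFun).ne h2
  rw [ENNReal.toReal_ofReal (by positivity)] at h1' h2'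
  refine div_le_of_le_mul₀ ENNReal.toReal_nonneg (by positivity) (h1'.trans ?_)
  calc |P.det| * (2 * 1) ^ k = k ^ k * |P.det| * (2 * (1 / k : ℝ)) ^ k := by
        rw [mul_pow, mul_pow, one_div, inv_pow]; field_simp; simp
    _ ≤ _ := mul_le_mul_of_nonneg_left h2' (by positivity)

/-- Determinants of `A` on unit vectors, tested against unit functionals, are controlled by the
maximal volume growth: the functionals serve as coordinates on the image of the span of `g`, in
which the unit ball lies in a cube, while the image of the unit ball contains the `P`-image of a
cube. -/
theorem abs_det_le_volGrowth {k : ℕ} (hk0 : 1 ≤ k) (A : V →L[ℝ] W) (g : Fin k → V)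
    (hg : ∀ j, ‖g j‖ ≤ 1) (φ : Fin k → W →L[ℝ] ℝ) (hφ : ∀ i, ‖φ i‖ ≤ 1)
    (P : Matrix (Fin k) (Fin k) ℝ) (hP : ∀ i j, P i j = φ i (A (g j)))
    (hdet : P.det ≠ 0) : |P.det| ≤ k ^ k * volGrowth k A := by
  have hkr : (0 : ℝ) < k := by exact_mod_cast hk0
  set G : Submodule ℝ V := Submodule.span ℝ (Set.range g) with hG
  have : FiniteDimensional ℝ G := FiniteDimensional.span_of_finite ℝ (Set.finite_range g)
  have hgG : ∀ j, g j ∈ G := fun j => Submodule.subset_span ⟨j, rfl⟩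
  have hsum : ∀ t : Fin k → ℝ, ∑ j, t j • g j ∈ G := fun t =>
    Submodule.sum_mem _ fun j _ => Submodule.smul_mem _ _ (hgG j)
  let L : ↥(G.map A.toLinearMap) →ₗ[ℝ] (Fin k → ℝ) :=
    (LinearMap.pi fun i => (φ i).toLinearMap) ∘ₗ (G.map A.toLinearMap).subtype
  have hL : ∀ t : Fin k → ℝ, L ⟨A (∑ j, t j • g j), Submodule.mem_map_of_mem (hsum t)⟩
      = P.mulVec t := by
    intro t
    ext i
    simp only [L, LinearMap.comp_apply, Submodule.subtype_apply, LinearMap.pi_apply,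
      ContinuousLinearMap.coe_coe, map_sum, map_smul, smul_eq_mul, Matrix.mulVec, dotProduct, hP]
    exact Finset.sum_congr rfl fun j _ => mul_comm _ _
  have hsurj : Function.Surjective L := by
    intro y
    refine ⟨_, (hL (P⁻¹.mulVec y)).trans ?_⟩
    rw [Matrix.mulVec_mulVec, Matrix.mul_nonsing_inv _ (isUnit_iff_ne_zero.2 hdet),
      Matrix.one_mulVec]
  have d1 : k ≤ Module.finrank ℝ ↥(G.map A.toLinearMap) := by
    have := LinearMap.finrank_le_finrank_of_surjective hsurj
    simpa using this
  have d2 : Module.finrank ℝ ↥(G.map A.toLinearMap) ≤ Module.finrank ℝ G :=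
    Submodule.finrank_map_le _ _
  have d3 : Module.finrank ℝ G ≤ k := by
    have := finrank_range_le_card (R := ℝ) g
    simpa [Set.finrank] using this
  have hk : Module.finrank ℝ G = k := by omega
  have hinj : Function.Injective L :=
    (LinearMap.injective_iff_surjective_of_finrank_eq_finrank
      (by rw [Module.finrank_fin_fun]; omega)).2 hsurj
  let T := LinearEquiv.ofBijective L ⟨hinj, hsurj⟩
  have h1 : ENNReal.ofReal (|P.det| * (2 * (1 / k : ℝ)) ^ k) ≤
      volume (T '' {x : ↥(G.map A.toLinearMap) | ∃ v ∈ G, ‖v‖ ≤ 1 ∧ A v = (x : W)}) := by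
    rw [← volume_toLin_ball P (by positivity)]
    refine measure_mono ?_
    rintro _ ⟨t, ht, rfl⟩
    rw [mem_closedBall_zero_iff, pi_norm_le_iff_of_nonneg (by positivity)] at ht
    refine ⟨_, ⟨∑ j, t j • g j, hsum t, ?_, rfl⟩, hL t⟩
    calc ‖∑ i, t i • g i‖ ≤ ∑ i : Fin k, (1 / k : ℝ) := by
          refine norm_sum_le_of_le _ fun i _ => ?_
          rw [norm_smul]
          calc ‖t i‖ * ‖g i‖ ≤ (1 / k) * 1 :=
                mul_le_mul (ht i) (hg i) (norm_nonneg _) (by positivity)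
            _ = _ := mul_one _
      _ = 1 := by simp [hkr.ne']
  have h2 : volume (T '' {x : ↥(G.map A.toLinearMap) | ‖(x : W)‖ ≤ 1}) ≤
      ENNReal.ofReal (2 ^ k) := by
    have := Real.volume_pi_closedBall (0 : Fin k → ℝ) (r := 1) zero_le_one
    rw [Fintype.card_fin, mul_one] at this
    rw [← this]
    refine measure_mono ?_
    rintro _ ⟨x, hx, rfl⟩
    rw [mem_closedBall_zero_iff, pi_norm_le_iff_of_nonneg zero_le_one]
    intro i
    change ‖φ i (x : W)‖ ≤ 1
    exact (φ i).le_of_opNorm_le_of_le (hφ i) hx |>.trans (by norm_num)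
  have hBfin := (volume_ball_lt_top A G T).ne
  have hSle := volume_image_le A G T
  have hSfin := ne_top_of_le_ne_top (ENNReal.mul_ne_top ENNReal.ofReal_ne_top hBfin) hSle
  have hdet' : 0 < |P.det| := abs_pos.2 hdet
  have hB0 : 0 < (volume (T '' {x : ↥(G.map A.toLinearMap) | ‖(x : W)‖ ≤ 1})).toReal := by
    refine ENNReal.toReal_pos ?_ hBfin
    intro h0
    rw [h0, mul_zero] at hSle
    have := h1.trans hSle
    simp only [nonpos_iff_eq_zero, ENNReal.ofReal_eq_zero] at this
    exact absurd this (not_le.2 (by positivity))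
  have h1' := ENNReal.toReal_mono hSfin h1
  have h2' := ENNReal.toReal_mono ENNReal.ofReal_ne_top h2
  rw [ENNReal.toReal_ofReal (by positivity)] at h1' h2'
  have hV := detOn_le_volGrowth A G hk
  rw [detOn_eq A G hk T, div_le_iff₀ hB0] at hV
  have hV0 : 0 ≤ volGrowth k A := by
    by_contra hneg
    have := mul_neg_of_neg_of_pos (not_le.1 hneg) hB0
    have h3 : 0 < |P.det| * (2 * (1 / k : ℝ)) ^ k := by positivity
    linarith
  have h4 : |P.det| * (2 * (1 / k : ℝ)) ^ k ≤ volGrowth k A * 2 ^ k :=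
    h1'.trans (hV.trans (mul_le_mul_of_nonneg_left h2' hV0))
  have h5 : |P.det| * (2 * (1 / k : ℝ)) ^ k = |P.det| / k ^ k * 2 ^ k := by
    rw [mul_pow, one_div, inv_pow]; ring
  rw [h5] at h4
  have h6 := le_of_mul_le_mul_right h4 (by positivity)
  rw [div_le_iff₀ (by positivity)] at h6
  linarith

/-! ### Splittings and near-maximal subspaces -/

/-- A bounded biorthogonal system `(b, θ)` over a basis `b` of `E` splits the space as
`E ⊕ ⋂ ker θ i`, with a projection of norm at most `k * M`. -/
theorem split_of_biorthogonal {k : ℕ} (E : Submodule ℝ V) (b : Module.Basis (Fin k) ℝ E)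
    (hb : ∀ i, ‖b i‖ ≤ 1) (θ : Fin k → V →L[ℝ] ℝ) {M : ℝ} (hM : 0 ≤ M)
    (hθ : ∀ i v, |θ i v| ≤ M * ‖v‖) (hθb : ∀ (x : E) i, θ i x = b.repr x i) :
    ∃ F : Submodule ℝ V, (∀ v, v ∈ F ↔ ∀ i, θ i v = 0) ∧ ClosedCodim F k ∧ IsCompl E F ∧
      ∃ π : V →L[ℝ] V, IsProjOn π E F ∧ ‖π‖ ≤ k * M := by
  let Λ : V →L[ℝ] (Fin k → ℝ) := ContinuousLinearMap.pi θ
  have hΛE : ∀ x : E, Λ x = b.equivFun x := fun x => by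
    ext i
    exact hθb x i
  have hsurj : Function.Surjective Λ.toLinearMap := fun y =>
    ⟨b.equivFun.symm y, (hΛE _).trans (b.equivFun.apply_symm_apply y)⟩
  have hmem : ∀ v, v ∈ LinearMap.ker Λ.toLinearMap ↔ ∀ i, θ i v = 0 := fun v => by
    rw [LinearMap.mem_ker]
    exact funext_iff
  refine ⟨LinearMap.ker Λ.toLinearMap, hmem, ⟨Λ.isClosed_ker, ?_, ?_⟩, ⟨?_, ?_⟩, ?_⟩
  · exact (Λ.toLinearMap.quotKerEquivOfSurjective hsurj).symm.finiteDimensional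
  · rw [(Λ.toLinearMap.quotKerEquivOfSurjective hsurj).finrank_eq, Module.finrank_fin_fun]
  · rw [Submodule.disjoint_def]
    intro x hx hx'
    have h1 : b.equivFun ⟨x, hx⟩ = 0 := (hΛE ⟨x, hx⟩).symm.trans hx'
    have h2 := (LinearEquiv.map_eq_zero_iff _).1 h1
    simpa using congrArg Subtype.val h2
  · rw [codisjoint_iff, eq_top_iff]
    intro v _
    refine Submodule.mem_sup.2 ⟨_, (b.equivFun.symm (Λ v)).2,
      v - (b.equivFun.symm (Λ v) : E), ?_, by simp⟩
    rw [LinearMap.mem_ker, map_sub, sub_eq_zero]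
    exact ((hΛE _).trans (b.equivFun.apply_symm_apply _)).symm
  · refine ⟨∑ i, (θ i).smulRight (b i : V), ⟨?_, ?_⟩, ?_⟩
    · intro v hv
      have := congrArg Subtype.val (b.sum_repr ⟨v, hv⟩)
      simp only [Submodule.coe_sum, Submodule.coe_smul] at this
      simp only [sum_apply, ContinuousLinearMap.smulRight_apply]
      conv_rhs => rw [← this]
      exact Finset.sum_congr rfl fun i _ => by rw [← hθb ⟨v, hv⟩ i]
    · intro v hv
      simp [(hmem v).1 hv]
    · refine ContinuousLinearMap.opNorm_le_bound _ (by positivity) fun v => ?_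
      simp only [sum_apply, ContinuousLinearMap.smulRight_apply]
      calc ‖∑ i, θ i v • (b i : V)‖ ≤ ∑ i : Fin k, M * ‖v‖ := by
            refine norm_sum_le_of_le _ fun i _ => ?_
            rw [norm_smul]
            calc ‖θ i v‖ * ‖(b i : V)‖ ≤ (M * ‖v‖) * 1 :=
                  mul_le_mul (hθ i v) (hb i) (norm_nonneg _) (by positivity)
              _ = _ := mul_one _
        _ = k * M * ‖v‖ := by simp [mul_assoc]

theorem restrNorm_nonneg (A : V →L[ℝ] W) (F : Submodule ℝ V) : 0 ≤ restrNorm A F :=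
  (A.comp F.subtypeL).opNorm_nonneg

/-- Transversality with subspaces of codimension `k`: if `A` expands `E` at least as much as `F`,
up to the constant `C`, and the projection onto `A E` along `A F` has norm at most `k`, then `‖A|_F‖`
is controlled by `‖A|_G‖` for every `G` of codimension `k = dim E`. -/
theorem restrNorm_le_of_codim {k : ℕ} (A : V →L[ℝ] W) (E F G : Submodule ℝ V)
    [FiniteDimensional ℝ E] (hE : Module.finrank ℝ E = k) (hG : ClosedCodim G k)
    (hEF : Disjoint E F) (π : W →L[ℝ] W) (hπE : ∀ e ∈ E, π (A e) = A e)
    (hπF : ∀ v ∈ F, π (A v) = 0) (hπ : ‖π‖ ≤ k) {C : ℝ} (hC : 0 ≤ C)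
    (h : ∀ e ∈ E, ∀ v ∈ F, ‖A v‖ * ‖e‖ ≤ C * ‖v‖ * ‖A e‖) :
    restrNorm A F ≤ (C * k + (1 + k)) * restrNorm A G := by
  set R := restrNorm A G with hR
  have hR0 : 0 ≤ R := restrNorm_nonneg A G
  refine ContinuousLinearMap.opNorm_le_bound _ (by positivity) ?_
  rintro ⟨v, hv⟩
  change ‖A v‖ ≤ (C * k + (1 + k)) * R * ‖v‖
  by_cases hv0 : v = 0
  · simp [hv0]
  have := hG.2.1
  let L : (E × ℝ) →ₗ[ℝ] V := E.subtype.coprod (LinearMap.toSpanSingleton ℝ V v)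
  have hker : LinearMap.ker (G.mkQ ∘ₗ L) ≠ ⊥ := by
    refine LinearMap.ker_ne_bot_of_finrank_lt ?_
    rw [hG.2.2, Module.finrank_prod, hE, Module.finrank_self]
    omega
  obtain ⟨⟨e, t⟩, hmem, hne⟩ := Submodule.exists_mem_ne_zero_of_ne_bot hker
  have hg : (e : V) + t • v ∈ G := by
    rw [← Submodule.Quotient.mk_eq_zero]
    simpa [L] using hmem
  set g : V := (e : V) + t • v with hgdef
  have hg0 : g ≠ 0 := by
    intro h0
    apply hne
    have he : (e : V) = -(t • v) := eq_neg_of_add_eq_zero_left h0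
    have he0 : (e : V) = 0 := by
      refine (Submodule.disjoint_def.1 hEF) _ e.2 ?_
      rw [he]
      exact F.neg_mem (F.smul_mem t hv)
    have ht : t = 0 := by
      have : t • v = 0 := by simpa [hgdef, he0] using h0
      exact (smul_eq_zero.1 this).resolve_right hv0
    exact Prod.ext (Subtype.ext he0) ht
  have hAg : ‖A g‖ ≤ R * ‖g‖ := (A.comp G.subtypeL).le_opNorm ⟨g, hg⟩
  have hπg : π (A g) = A e := by
    rw [hgdef, map_add, map_add, hπE _ e.2, map_smul, map_smul, hπF _ hv]
    simp
  have hAe : ‖A e‖ ≤ k * ‖A g‖ := by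
    rw [← hπg]
    exact π.le_of_opNorm_le hπ _
  have hAv : |t| * ‖A v‖ ≤ (1 + k) * ‖A g‖ := by
    have : t • A v = A g - A e := by simp [hgdef]
    rw [← Real.norm_eq_abs, ← norm_smul, this]
    linarith [norm_sub_le (A g) (A e)]
  have hgn : ‖g‖ ≤ ‖(e : V)‖ + |t| * ‖v‖ := by
    refine (norm_add_le _ _).trans ?_
    rw [norm_smul, Real.norm_eq_abs]
  have hgpos : 0 < ‖g‖ := norm_pos_iff.2 hg0
  refine le_of_mul_le_mul_right ?_ hgpos
  calc ‖A v‖ * ‖g‖ ≤ ‖A v‖ * (‖(e : V)‖ + |t| * ‖v‖) := by gcongr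
    _ = ‖A v‖ * ‖(e : V)‖ + |t| * ‖A v‖ * ‖v‖ := by ring
    _ ≤ C * ‖v‖ * ‖A e‖ + (1 + k) * ‖A g‖ * ‖v‖ := by
        exact add_le_add (h e e.2 v hv) (mul_le_mul_of_nonneg_right hAv (norm_nonneg _))
    _ ≤ C * ‖v‖ * (k * ‖A g‖) + (1 + k) * ‖A g‖ * ‖v‖ := by gcongr
    _ = (C * k + (1 + k)) * ‖v‖ * ‖A g‖ := by ring
    _ ≤ (C * k + (1 + k)) * ‖v‖ * (R * ‖g‖) := by gcongr
    _ = _ := by ring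

/-- Replacing one of the unit vectors `e j` by `v` and testing against arbitrary unit functionals
increases the determinant at most by the factor `k ^ (2 k) / r * ‖v‖`; this is where the
near-maximality of `det(A|E)` enters. -/
theorem abs_det_update_le {k : ℕ} (hk0 : 1 ≤ k) {r : ℝ} (hr : 0 < r) (A : V →L[ℝ] W)
    (e : Fin k → V) (he : ∀ j, ‖e j‖ ≤ 1) {d : ℝ}
    (hV : r * volGrowth k A ≤ k ^ k * d) (hd : 0 ≤ d)
    (φ : Fin k → W →L[ℝ] ℝ) (hφ : ∀ i, ‖φ i‖ ≤ 1) (i : Fin k) (v : V) :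
    |(Matrix.of fun l j => φ l (A (Function.update e i v j))).det| ≤
      k ^ k * k ^ k / r * d * ‖v‖ := by
  have key : ∀ v : V, ‖v‖ ≤ 1 →
      |(Matrix.of fun l j => φ l (A (Function.update e i v j))).det| ≤
        k ^ k * k ^ k / r * d := by
    intro v hv
    by_cases hdet : (Matrix.of fun l j => φ l (A (Function.update e i v j))).det = 0
    · rw [hdet, abs_zero]; positivity
    refine (abs_det_le_volGrowth hk0 A (Function.update e i v) ?_ φ hφ _
      (fun _ _ => rfl) hdet).trans ?_
    · intro j
      by_cases h : j = i
      · subst h; simpa using hv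
      · simpa [h] using he j
    · have : volGrowth k A ≤ k ^ k * d / r := by
        rw [le_div_iff₀ hr]; linarith
      calc (k : ℝ) ^ k * volGrowth k A ≤ k ^ k * (k ^ k * d / r) := by gcongr
        _ = _ := by ring
  have hscale : ∀ (c : ℝ) (v : V),
      (Matrix.of fun l j => φ l (A (Function.update e i (c • v) j))).det =
        c * (Matrix.of fun l j => φ l (A (Function.update e i v j))).det := by
    intro c v
    have h1 : ∀ u : V, (Matrix.of fun l j => φ l (A (Function.update e i u j))) =
        (Matrix.of fun l j => φ l (A (e j))).updateCol i (fun l => φ l (A u)) := by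
      intro u
      ext l j
      by_cases h : j = i
      · subst h; simp
      · simp [h]
    rw [h1, h1, ← Matrix.det_updateCol_smul]
    congr 2
    ext l
    simp
  by_cases hv0 : v = 0
  · have := hscale 0 0
    rw [zero_mul, smul_zero] at this
    rw [hv0, this]; simp
  have hv' : 0 < ‖v‖ := norm_pos_iff.2 hv0
  have h1 := key (‖v‖⁻¹ • v) (by rw [norm_smul]; simp [hv0])
  rw [hscale, abs_mul, abs_of_pos (inv_pos.2 hv'), inv_mul_le_iff₀ hv'] at h1
  linarith

end Aux

universe u v

/-- **Proposition 2.10 (approximate singular value decomposition in Banach spaces).** -/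
theorem approximate_svd :
    ∀ k : ℕ, 1 ≤ k → ∀ r : ℝ, r ∈ Set.Ioo (0:ℝ) 1 →
    ∃ D : ℝ, 1 < D ∧
    ∀ (V : Type u) (W : Type v),
    ∀ (_ : NormedAddCommGroup V) (_ : NormedSpace ℝ V) (_ : CompleteSpace V)
      (_ : NormedAddCommGroup W) (_ : NormedSpace ℝ W) (_ : CompleteSpace W),
    ∀ (A : V →L[ℝ] W) (E : Submodule ℝ V),
      FiniteDimensional ℝ ↥E → Module.finrank ℝ ↥E = k →
      E ⊓ LinearMap.ker A.toLinearMap = ⊥ →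
      r * volGrowth k A ≤ detOn A E →
      ∃ F : Submodule ℝ V, ∃ F' : Submodule ℝ W,
        ClosedCodim F k ∧ IsCompl E F ∧
        ClosedCodim F' k ∧ IsCompl (E.map A.toLinearMap) F' ∧
        F.map A.toLinearMap ≤ F' ∧
        (∃ π, IsProjOn π E F ∧ ‖π‖ ≤ D) ∧
        (∃ π', IsProjOn π' (E.map A.toLinearMap) F' ∧ ‖π'‖ ≤ D) ∧
        restrNorm A F ≤ D * gelfand (k+1) A := by

  intro k hk0 r hr
  have hkr : (1 : ℝ) ≤ k := by exact_mod_cast hk0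
  set M : ℝ := k ^ k * k ^ k / r with hMdef
  have hr0 : 0 < r := hr.1
  have hM : 0 < M := by positivity
  refine ⟨k * M + (k * (k * M) * k + (1 + k)), ?_, ?_⟩
  · have h1 : 0 < k * M := by positivity
    have h2 : 0 < k * (k * M) * k := by positivity
    linarith
  intro V W _ _ _ _ _ _ A E hEfin hEk hker hvol
  have hinj : ∀ x ∈ E, A x = 0 → x = 0 := fun x hx h0 => by
    have : x ∈ E ⊓ LinearMap.ker A.toLinearMap := ⟨hx, h0⟩
    rwa [hker, Submodule.mem_bot] at this
  obtain ⟨e, he1, he2⟩ := exists_auerbach hEk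
  have hAEk : Module.finrank ℝ ↥(E.map A.toLinearMap) = k := by
    rw [← hEk]
    refine (LinearEquiv.finrank_eq (LinearEquiv.ofBijective
      (A.toLinearMap.submoduleMap E) ⟨?_, A.toLinearMap.submoduleMap_surjective E⟩)).symm
    rw [← LinearMap.ker_eq_bot, LinearMap.ker_eq_bot']
    intro x hx
    exact Subtype.ext (hinj x x.2 (congrArg Subtype.val hx))
  obtain ⟨w, hw1, hw2⟩ := exists_auerbach hAEk
  -- Hahn–Banach extensions to `W` of the coordinate functionals of `A E`
  have hext : ∀ i, ∃ g : W →L[ℝ] ℝ, (∀ x : ↥(E.map A.toLinearMap), g x = w.repr x i) ∧ ‖g‖ ≤ 1 := by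
    intro i
    let f : ↥(E.map A.toLinearMap) →L[ℝ] ℝ :=
      (w.coord i).mkContinuous 1 (fun x => by simpa using hw2 x i)
    obtain ⟨g, hg1, hg2⟩ := exists_extension_norm_eq (E.map A.toLinearMap) f
    exact ⟨g, fun x => hg1 x, hg2.le.trans (LinearMap.mkContinuous_norm_le _ zero_le_one _)⟩
  choose ℓ hℓ hℓ1 using hext
  have hℓle : ∀ i x, |ℓ i x| ≤ ‖x‖ := fun i x => by
    simpa using (ℓ i).le_of_opNorm_le (hℓ1 i) x
  let P : Matrix (Fin k) (Fin k) ℝ := Matrix.of fun i j => ℓ i (A (e j))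
  have hPw : ∀ i j, P i j = w.repr ⟨A (e j), Submodule.mem_map_of_mem (e j).2⟩ i :=
    fun i j => hℓ i ⟨A (e j), Submodule.mem_map_of_mem (e j).2⟩
  have hPmul : ∀ x : E, P.mulVec (e.equivFun x) = fun i => ℓ i (A x) := by
    intro x
    ext i
    have hs := congrArg (fun y : E => ℓ i (A (y : V))) (e.sum_equivFun x)
    simp only [Submodule.coe_sum, Submodule.coe_smul, map_sum, map_smul, smul_eq_mul] at hs
    rw [← hs]
    simp only [Matrix.mulVec, dotProduct, P, Matrix.of_apply]
    exact Finset.sum_congr rfl fun j _ => mul_comm _ _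
  have hdet : P.det ≠ 0 := by
    intro h0
    obtain ⟨t, ht0, ht⟩ := Matrix.exists_mulVec_eq_zero_iff.2 h0
    have h1 := hPmul (e.equivFun.symm t)
    rw [e.equivFun.apply_symm_apply, ht] at h1
    have h2 : (⟨A (e.equivFun.symm t), Submodule.mem_map_of_mem (e.equivFun.symm t).2⟩ :
        ↥(E.map A.toLinearMap)) = 0 := by
      refine w.ext_elem fun i => ?_
      rw [← hℓ]
      simpa using (congrFun h1 i).symm
    have h3 : e.equivFun.symm t = 0 :=
      Subtype.ext (hinj _ (e.equivFun.symm t).2 (congrArg Subtype.val h2))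
    exact ht0 ((LinearEquiv.map_eq_zero_iff _).1 h3)
  have hunit : IsUnit P.det := isUnit_iff_ne_zero.2 hdet
  have hdpos : 0 < |P.det| := abs_pos.2 hdet
  have hV : r * volGrowth k A ≤ k ^ k * |P.det| :=
    hvol.trans (detOn_le_det hk0 A E e he2 w hw1 P hPw)
  have hupd := fun φ hφ i v => abs_det_update_le hk0 hr0 A (fun j => (e j : V)) he1 hV
    (abs_nonneg _) φ hφ i v
  -- the coordinate functionals of `E`, extended to `V` through `A`
  let θ : Fin k → V →L[ℝ] ℝ := fun i => ∑ m, P⁻¹ i m • (ℓ m).comp A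
  have hθapp : ∀ i v, θ i v = P⁻¹.mulVec (fun m => ℓ m (A v)) i := fun i v => by
    simp [θ, Matrix.mulVec, dotProduct]
  have hinvadj : ∀ i m, P.det * P⁻¹ i m = P.adjugate i m := fun i m => by
    rw [Matrix.inv_def, Matrix.smul_apply, smul_eq_mul, ← mul_assoc,
      Ring.mul_inverse_cancel _ hunit, one_mul]
  have hcol : ∀ (φ : Fin k → W →L[ℝ] ℝ) (i : Fin k) (v : V),
      (Matrix.of fun l j => φ l (A (Function.update (fun j => (e j : V)) i v j))) =
        (Matrix.of fun l j => φ l (A (e j))).updateCol i (fun l => φ l (A v)) := by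
    intro φ i v
    ext l j
    by_cases h : j = i
    · subst h; simp
    · simp [h]
  have hθle : ∀ i v, |θ i v| ≤ M * ‖v‖ := by
    intro i v
    have h1 : P.det * θ i v = (P.updateCol i (fun l => ℓ l (A v))).det := by
      rw [hθapp, ← Matrix.cramer_apply, Matrix.cramer_eq_adjugate_mulVec]
      simp only [Matrix.mulVec, dotProduct, Finset.mul_sum, ← mul_assoc, hinvadj]
    have h2 := hupd ℓ hℓ1 i v
    rw [hcol] at h2
    change |(P.updateCol i (fun l => ℓ l (A v))).det| ≤ _ at h2
    rw [← h1, abs_mul] at h2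
    refine le_of_mul_le_mul_left (h2.trans_eq ?_) hdpos
    rw [hMdef]; ring
  have hθe : ∀ (x : E) i, θ i x = e.repr x i := by
    intro x i
    rw [hθapp, ← hPmul, Matrix.mulVec_mulVec, Matrix.nonsing_inv_mul _ hunit, Matrix.one_mulVec]
    rfl
  obtain ⟨F, hF, hFc, hEF, π, hπ, hπn⟩ := split_of_biorthogonal E e he1 θ hM.le hθle hθe
  obtain ⟨F', hF', hFc', hEF', π', hπ', hπn'⟩ := split_of_biorthogonal (E.map A.toLinearMap) w hw1
    ℓ zero_le_one (fun i x => by simpa using hℓle i x) (fun x i => hℓ i x)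
  have hFℓ : ∀ v ∈ F, ∀ i, ℓ i (A v) = 0 := by
    intro v hv
    have h1 : P⁻¹.mulVec (fun m => ℓ m (A v)) = 0 := by
      ext i
      rw [← hθapp]
      exact (hF v).1 hv i
    have h2 := congrArg P.mulVec h1
    rw [Matrix.mulVec_mulVec, Matrix.mul_nonsing_inv _ hunit, Matrix.one_mulVec,
      Matrix.mulVec_zero] at h2
    exact congrFun h2
  have hAF : F.map A.toLinearMap ≤ F' := by
    rintro _ ⟨v, hv, rfl⟩
    exact (hF' _).2 (hFℓ v hv)
  -- testing `v ∈ F` in column `i` against a norming functional in row `m` isolates a cofactor of `P`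
  have hinv : ∀ v ∈ F, ∀ i m, |P⁻¹ i m| * ‖A v‖ ≤ M * ‖v‖ := by
    intro v hv i m
    obtain ⟨ψ, hψ1, hψ2⟩ := exists_dual_vector'' ℝ (A v)
    have hψ2' : ψ (A v) = ‖A v‖ := by simpa using hψ2
    have h2 := hupd (Function.update ℓ m ψ) (fun l => by
      by_cases h : l = m
      · subst h; simpa using hψ1
      · simpa [h] using hℓ1 l) i v
    rw [hcol] at h2
    have hrow : (Matrix.of fun l j => Function.update ℓ m ψ l (A (e j))) =
        P.updateRow m (fun j => ψ (A (e j))) := by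
      ext l j
      by_cases h : l = m
      · subst h; simp
      · simp [h, P]
    have hsing : (fun l => Function.update ℓ m ψ l (A v)) = ‖A v‖ • Pi.single m (1 : ℝ) := by
      ext l
      by_cases h : l = m
      · subst h; simp [hψ2']
      · simp [h, hFℓ v hv l]
    have h3 : ((P.updateRow m (fun j => ψ (A (e j)))).updateCol i
        (‖A v‖ • Pi.single m (1 : ℝ))).det = ‖A v‖ * P.adjugate i m := by
      rw [Matrix.det_updateCol_smul, ← Matrix.cramer_apply, Matrix.cramer_eq_adjugate_mulVec,
        Matrix.mulVec_single_one, Matrix.col_apply, Matrix.adjugate_apply, Matrix.updateRow_idem,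
        ← Matrix.adjugate_apply]
    rw [hrow, hsing, h3, ← hinvadj, abs_mul, abs_mul, abs_of_nonneg (norm_nonneg (A v))] at h2
    refine le_of_mul_le_mul_left (le_trans (le_of_eq ?_) (h2.trans_eq ?_)) hdpos
    · ring
    · rw [hMdef]; ring
  have hexp : ∀ x ∈ E, ∀ v ∈ F, ‖A v‖ * ‖x‖ ≤ k * (k * M) * ‖v‖ * ‖A x‖ := by
    intro x hx v hv
    have h1 : ∀ i, ‖A v‖ * |θ i x| ≤ k * (M * ‖v‖ * ‖A x‖) := by
      intro i
      rw [hθapp]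
      simp only [Matrix.mulVec, dotProduct]
      calc ‖A v‖ * |∑ m, P⁻¹ i m * ℓ m (A x)|
          ≤ ‖A v‖ * ∑ m, |P⁻¹ i m| * ‖A x‖ := by
            gcongr
            refine (Finset.abs_sum_le_sum_abs _ _).trans (Finset.sum_le_sum fun m _ => ?_)
            rw [abs_mul]
            gcongr
            exact hℓle m _
        _ = ∑ m, (|P⁻¹ i m| * ‖A v‖) * ‖A x‖ := by
            rw [Finset.mul_sum]
            exact Finset.sum_congr rfl fun m _ => by ring
        _ ≤ ∑ m : Fin k, M * ‖v‖ * ‖A x‖ := by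
            exact Finset.sum_le_sum fun m _ =>
              mul_le_mul_of_nonneg_right (hinv v hv i m) (norm_nonneg _)
        _ = _ := by simp
    have h2 : ‖x‖ ≤ ∑ i, |θ i x| := by
      have hs := congrArg Subtype.val (e.sum_repr ⟨x, hx⟩)
      simp only [Submodule.coe_sum, Submodule.coe_smul] at hs
      conv_lhs => rw [← hs]
      refine norm_sum_le_of_le _ fun i _ => ?_
      rw [norm_smul, ← hθe ⟨x, hx⟩ i, Real.norm_eq_abs]
      exact mul_le_of_le_one_right (abs_nonneg _) (he1 i)
    calc ‖A v‖ * ‖x‖ ≤ ‖A v‖ * ∑ i, |θ i x| := by gcongr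
      _ = ∑ i, ‖A v‖ * |θ i x| := Finset.mul_sum _ _ _
      _ ≤ ∑ i : Fin k, k * (M * ‖v‖ * ‖A x‖) := Finset.sum_le_sum fun i _ => h1 i
      _ = k * (k * M) * ‖v‖ * ‖A x‖ := by simp; ring
  rw [mul_one] at hπn'
  have hkM : 0 < k * M := by positivity
  have hkkM : 0 < k * (k * M) * k := by positivity
  refine ⟨F, F', hFc, hEF, hFc', hEF', hAF, ⟨π, hπ, by linarith⟩, ⟨π', hπ', by linarith⟩, ?_⟩
  have hgel : restrNorm A F / (k * (k * M) * k + (1 + k)) ≤ gelfand (k + 1) A := by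
    refine le_csInf ⟨_, F, by simpa using hFc, rfl⟩ ?_
    rintro _ ⟨G, hG, rfl⟩
    rw [div_le_iff₀' (by positivity)]
    exact restrNorm_le_of_codim A E F G hEk (by simpa using hG) hEF.disjoint π'
      (fun x hx => hπ'.1 _ (Submodule.mem_map_of_mem hx))
      (fun v hv => hπ'.2 _ (hAF (Submodule.mem_map_of_mem hv))) hπn' (by positivity) hexp
  have hg0 : 0 ≤ gelfand (k + 1) A :=
    (div_nonneg (restrNorm_nonneg A F) (by positivity)).trans hgel
  rw [div_le_iff₀' (by positivity)] at hgel
  refine hgel.trans (mul_le_mul_of_nonneg_right ?_ hg0)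
  linarith
end

section
/- For any integer k ≥ 1 there exists a constant C_k > 1 with the following property. Let V, V' be Banach spaces and let A ∈ L(V,V') have rank ≥ k. Let E ⊆ V be a k-dimensional subspace such that det(A|E) ≥ (1/2) V_k(A). Then there exist a closed k-codimensional complement F ⊆ V to E and a closed k-codimensional complement F' ⊆ V' to E' := AE such that: A F ⊆ F'; m(A|_E) ≥ C_k^{-1} c_k(A) and ‖A|_F‖ ≤ C_k c_{k+1}(A); and ‖π_{E//F}‖ ≤ C_k, ‖π_{E'//F'}‖ ≤ C_k. -/
/-!
The volume growth `V_n(A)` is replaced by the supremum `detSup n A` of `|det (f i (A (v j)))|` over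
vectors `v j` and functionals `f i` in the unit balls of `V` and of the dual of `W`. Restricting the
vectors to `E` gives `detSup n A E`.

Comparison with volumes (`detOn_le`, `le_detOn`). In the coordinates `w ↦ (f i w)ᵢ` on `A E`, the
sets `A B_E` and `B_{AE}` are compared with cubes and images of cubes under the pairing matrix
`M = (f i (A (v j)))`. Hence `det(A|E)` agrees with `detSup k A E`, and `V_k(A)` dominates
`detSup k A`, up to factors depending on `k` only. So if `det(A|E) ≥ V_k(A) / 2`, any `f, v` that is
maximal on `E` up to a factor `2` is maximal on all of `V` up to a constant `K`.

The splitting (`splitting`). Fix such `f, v`. Put `F' = ⋂ ker (f i)` and `F = A⁻¹ F'`. By Cramer's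
rule, the coefficient at `v j` of the projection of `x` to `E` along `F` is a quotient of two
determinants, the numerator having its column `j` replaced by `A x`; it is at most `K ‖x‖`.
The projection onto `A E` is bounded in the same way, replacing a row instead (`norm_A_sec_le`).

Gelfand numbers. Adjoining to `f, v` a vector killed by all `f i ∘ A` gives a block triangular
matrix, which yields `|det M| ‖A|_F‖ ≤ detSup (k + 1) A` and `detSup n A * c_{n+1}(A) ≤
detSup (n + 1) A`. Conversely, `n + 1` vectors have a combination in any given subspace of
codimension `n`, so a Laplace expansion gives `detSup (n + 1) A ≤ (n + 1)² c_{n+1}(A) detSup n A`.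
Finally, a unit vector `x` of `E` has a coefficient of size at least `1 / k` in the basis `v`, and a
Laplace expansion along the column `A x` gives `|det M| ≤ k² ‖A x‖ detSup (k - 1) A`.
-/

open Metric Filter MeasureTheory Topology

universe u v

namespace SVSplit

variable {V W : Type*} [NormedAddCommGroup V] [NormedSpace ℝ V]
  [NormedAddCommGroup W] [NormedSpace ℝ W]

/-! ### Determinants of pairings -/

/-- The matrix `(f i (A (v j)))` pairing functionals on `W` with the images of vectors of `V`. -/
def pairMat {n : ℕ} (A : V →L[ℝ] W) (f : Fin n → W →L[ℝ] ℝ) (v : Fin n → V) :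
    Matrix (Fin n) (Fin n) ℝ :=
  Matrix.of fun i j => f i (A (v j))

/-- The values `|det (f i (A (v j)))|` with `v j` in the unit ball of `E` and `f i` in the unit
ball of the dual of `W`. -/
def detSet (n : ℕ) (A : V →L[ℝ] W) (E : Submodule ℝ V) : Set ℝ :=
  {r | ∃ (f : Fin n → W →L[ℝ] ℝ) (v : Fin n → V), (∀ i, ‖f i‖ ≤ 1) ∧
    (∀ j, v j ∈ E ∧ ‖v j‖ ≤ 1) ∧ r = |(pairMat A f v).det|}

/-- The supremum of `detSet n A E`: a substitute for the volume growth `V_n(A|_E)` that is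
comparable to it up to a constant depending only on `n`, and for which Cramer's rule and Laplace
expansion are available. -/
noncomputable def detSup (n : ℕ) (A : V →L[ℝ] W) (E : Submodule ℝ V) : ℝ := sSup (detSet n A E)

lemma bddAbove_detSet (n : ℕ) (A : V →L[ℝ] W) (E : Submodule ℝ V) :
    BddAbove (detSet n A E) := by
  refine ⟨Nat.factorial (Fintype.card (Fin n)) • ‖A‖ ^ Fintype.card (Fin n), ?_⟩
  rintro r ⟨f, v, hf, hv, rfl⟩
  refine Matrix.det_le (abv := IsAbsoluteValue.toAbsoluteValue (abs : ℝ → ℝ)) ?_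
  intro i j
  change |f i (A (v j))| ≤ ‖A‖
  calc ‖f i (A (v j))‖ ≤ ‖f i‖ * ‖A (v j)‖ := (f i).le_opNorm _
    _ ≤ 1 * (‖A‖ * 1) := by
        gcongr
        · exact hf i
        · exact A.le_opNorm_of_le (hv j).2 |>.trans (by simp)
    _ = ‖A‖ := by ring

lemma le_detSup {n : ℕ} {A : V →L[ℝ] W} {E : Submodule ℝ V} {f : Fin n → W →L[ℝ] ℝ}
    {v : Fin n → V} (hf : ∀ i, ‖f i‖ ≤ 1) (hE : ∀ j, v j ∈ E) (hv : ∀ j, ‖v j‖ ≤ 1) :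
    |(pairMat A f v).det| ≤ detSup n A E :=
  le_csSup (bddAbove_detSet n A E) ⟨f, v, hf, fun j => ⟨hE j, hv j⟩, rfl⟩

lemma detSet_nonempty (n : ℕ) (A : V →L[ℝ] W) (E : Submodule ℝ V) : (detSet n A E).Nonempty :=
  ⟨_, fun _ => 0, fun _ => 0, by simp, by simp, rfl⟩

lemma detSup_nonneg (n : ℕ) (A : V →L[ℝ] W) (E : Submodule ℝ V) : 0 ≤ detSup n A E := by
  refine Real.sSup_nonneg ?_
  rintro r ⟨f, v, -, -, rfl⟩
  exact abs_nonneg _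

lemma detSup_le {n : ℕ} {A : V →L[ℝ] W} {E : Submodule ℝ V} {B : ℝ}
    (h : ∀ (f : Fin n → W →L[ℝ] ℝ) (v : Fin n → V), (∀ i, ‖f i‖ ≤ 1) →
      (∀ j, v j ∈ E) → (∀ j, ‖v j‖ ≤ 1) → |(pairMat A f v).det| ≤ B) :
    detSup n A E ≤ B := by
  refine csSup_le (detSet_nonempty n A E) ?_
  rintro r ⟨f, v, hf, hv, rfl⟩
  exact h f v hf (fun j => (hv j).1) (fun j => (hv j).2)

lemma pairMat_update {n : ℕ} (A : V →L[ℝ] W) (f : Fin n → W →L[ℝ] ℝ) (v : Fin n → V)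
    (j : Fin n) (x : V) :
    pairMat A f (Function.update v j x) = (pairMat A f v).updateCol j (fun i => f i (A x)) := by
  ext i l
  by_cases h : l = j
  · subst h; simp [pairMat]
  · simp [pairMat, h]

lemma pairMat_update_left {n : ℕ} (A : V →L[ℝ] W) (f : Fin n → W →L[ℝ] ℝ) (v : Fin n → V)
    (i : Fin n) (g : W →L[ℝ] ℝ) :
    pairMat A (Function.update f i g) v = (pairMat A f v).updateRow i (fun j => g (A (v j))) := by
  ext l j
  by_cases h : l = i
  · subst h; simp [pairMat]
  · simp [pairMat, h]

/-- Homogeneity in one vector: the constraint on `v j` may be dropped at the cost of a factor. -/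
lemma abs_det_updateCol_le {n : ℕ} {A : V →L[ℝ] W} {E : Submodule ℝ V} {f : Fin n → W →L[ℝ] ℝ}
    {v : Fin n → V} (hf : ∀ i, ‖f i‖ ≤ 1) (hE : ∀ j, v j ∈ E) (hv : ∀ j, ‖v j‖ ≤ 1)
    (j : Fin n) {x : V} (hx : x ∈ E) :
    |((pairMat A f v).updateCol j (fun i => f i (A x))).det| ≤ detSup n A E * ‖x‖ := by
  rcases eq_or_ne x 0 with rfl | hx0
  · have : (fun i => f i (A (0 : V))) = (0 : ℝ) • (0 : Fin n → ℝ) := by ext; simp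
    rw [this, Matrix.det_updateCol_smul]; simp
  have hn : 0 < ‖x‖ := norm_pos_iff.2 hx0
  have key : (fun i => f i (A x)) = ‖x‖ • fun i => f i (A (‖x‖⁻¹ • x)) := by
    ext i; simp [hn.ne']
  rw [key, Matrix.det_updateCol_smul, ← pairMat_update, abs_mul, abs_norm, mul_comm]
  gcongr
  refine le_detSup hf (fun l => ?_) (fun l => ?_) <;> by_cases h : l = j
  · subst h; simpa using E.smul_mem _ hx
  · simpa [h] using hE l
  · subst h; simp [norm_smul, hn.ne']
  · simpa [h] using hv l

/-- Homogeneity in one functional. -/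
lemma abs_det_updateRow_le {n : ℕ} {A : V →L[ℝ] W} {E : Submodule ℝ V} {f : Fin n → W →L[ℝ] ℝ}
    {v : Fin n → V} (hf : ∀ i, ‖f i‖ ≤ 1) (hE : ∀ j, v j ∈ E) (hv : ∀ j, ‖v j‖ ≤ 1)
    (i : Fin n) (g : W →L[ℝ] ℝ) :
    |((pairMat A f v).updateRow i (fun j => g (A (v j)))).det| ≤ detSup n A E * ‖g‖ := by
  rcases eq_or_ne g 0 with rfl | hg0
  · have : (fun j => (0 : W →L[ℝ] ℝ) (A (v j))) = (0 : ℝ) • (0 : Fin n → ℝ) := by ext; simp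
    rw [this, Matrix.det_updateRow_smul]; simp
  have hn : 0 < ‖g‖ := norm_pos_iff.2 hg0
  have key : (fun j => g (A (v j))) = ‖g‖ • fun j => (‖g‖⁻¹ • g) (A (v j)) := by
    ext j; simp [hn.ne']
  rw [key, Matrix.det_updateRow_smul, ← pairMat_update_left, abs_mul, abs_norm, mul_comm]
  gcongr
  refine le_detSup (fun l => ?_) hE hv
  by_cases h : l = i
  · subst h; simp [norm_smul, hn.ne']
  · simpa [h] using hf l

/-- Laplace expansion along a column that is not subject to the norm constraint. -/
lemma laplace_bound {n : ℕ} {A : V →L[ℝ] W} {E : Submodule ℝ V} {f : Fin (n + 1) → W →L[ℝ] ℝ}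
    {v : Fin (n + 1) → V} (hf : ∀ i, ‖f i‖ ≤ 1) (j : Fin (n + 1))
    (hE : ∀ l, l ≠ j → v l ∈ E) (hv : ∀ l, l ≠ j → ‖v l‖ ≤ 1) :
    |(pairMat A f v).det| ≤ (n + 1 : ℝ) * ‖A (v j)‖ * detSup n A E := by
  rw [Matrix.det_succ_column _ j]
  refine (Finset.abs_sum_le_sum_abs _ _).trans ?_
  have : ∀ i ∈ (Finset.univ : Finset (Fin (n + 1))),
      |(-1 : ℝ) ^ ((i : ℕ) + (j : ℕ)) * pairMat A f v i j *
        ((pairMat A f v).submatrix i.succAbove j.succAbove).det| ≤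
        ‖A (v j)‖ * detSup n A E := by
    intro i _
    rw [abs_mul, abs_mul, abs_pow, abs_neg, abs_one, one_pow, one_mul]
    have h1 : |pairMat A f v i j| ≤ ‖A (v j)‖ := by
      have := (f i).le_of_opNorm_le (hf i) (A (v j))
      simpa [pairMat] using this
    have h2 : |((pairMat A f v).submatrix i.succAbove j.succAbove).det| ≤ detSup n A E := by
      have : (pairMat A f v).submatrix i.succAbove j.succAbove =
          pairMat A (fun a => f (i.succAbove a)) (fun b => v (j.succAbove b)) := rfl
      rw [this]
      exact le_detSup (fun _ => hf _) (fun _ => hE _ (Fin.succAbove_ne _ _))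
        (fun _ => hv _ (Fin.succAbove_ne _ _))
    gcongr
  refine (Finset.sum_le_sum this).trans ?_
  simp [mul_assoc]

/-- If `x` is killed by all `f i ∘ A`, adjoining `x` to `v` and a functional norming `A x` to `f`
gives a block triangular matrix. -/
lemma det_mul_norm_le {n : ℕ} {A : V →L[ℝ] W} {f : Fin n → W →L[ℝ] ℝ}
    {v : Fin n → V} (hf : ∀ i, ‖f i‖ ≤ 1) (hv : ∀ j, ‖v j‖ ≤ 1)
    {x : V} (hx : ∀ i, f i (A x) = 0) :
    |(pairMat A f v).det| * ‖A x‖ ≤ detSup (n + 1) A ⊤ * ‖x‖ := by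
  obtain ⟨g, hg, hgx⟩ := exists_dual_vector'' ℝ (A x)
  have hdet : |(pairMat A (Fin.cons g f : Fin (n + 1) → W →L[ℝ] ℝ)
      (Fin.cons x v : Fin (n + 1) → V)).det| = |(pairMat A f v).det| * ‖A x‖ := by
    rw [Matrix.det_succ_column_zero, Fin.sum_univ_succ]
    have h0 : (pairMat A (Fin.cons g f : Fin (n + 1) → W →L[ℝ] ℝ)
      (Fin.cons x v : Fin (n + 1) → V)).submatrix (Fin.succAbove 0) Fin.succ =
        pairMat A f v := by
      ext i j; simp [pairMat]
    rw [h0]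
    have hgx' : g (A x) = ‖A x‖ := by simpa using hgx
    simp [pairMat, hx, hgx', abs_mul, mul_comm]
  rw [← hdet]
  have := abs_det_updateCol_le (A := A) (E := ⊤) (f := (Fin.cons g f : Fin (n + 1) → W →L[ℝ] ℝ))
    (v := (Fin.cons 0 v : Fin (n + 1) → V)) (fun i => Fin.cases hg hf i) (by simp)
    (fun j => Fin.cases (by simp) (by simpa using hv) j) 0 (x := x) trivial
  rwa [← pairMat_update, Fin.update_cons_zero] at this

/-- A codimension `n` subspace meets the span of any `n + 1` vectors, so one of them can be
replaced by a vector of the subspace. -/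
lemma detSup_succ_le {n : ℕ} {A : V →L[ℝ] W} {G : Submodule ℝ V} (hG : ClosedCodim G n) :
    detSup (n + 1) A ⊤ ≤ (n + 1 : ℝ) ^ 2 * restrNorm A G * detSup n A ⊤ := by
  obtain ⟨-, hfin, hrank⟩ := hG
  refine detSup_le fun f v hf _ hv => ?_
  have hdep : ¬ LinearIndependent ℝ (fun j => G.mkQ (v j)) := by
    intro h
    have := h.fintype_card_le_finrank
    simp [hrank] at this
  obtain ⟨c, hc, j1, hj1⟩ := Fintype.not_linearIndependent_iff.1 hdep
  obtain ⟨j, hj⟩ := Finite.exists_max (fun j => |c j|)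
  have hcj : 0 < |c j| := (abs_pos.2 hj1).trans_le (hj j1)
  set g : V := ∑ l, c l • v l with hg
  have hgG : g ∈ G := by
    rw [← Submodule.Quotient.mk_eq_zero, ← Submodule.mkQ_apply, hg, map_sum]
    simpa using hc
  have hgn : ‖g‖ ≤ (n + 1 : ℝ) * |c j| := by
    calc ‖g‖ ≤ ∑ l, ‖c l • v l‖ := norm_sum_le _ _
      _ ≤ ∑ l : Fin (n + 1), |c j| := by
          refine Finset.sum_le_sum fun l _ => ?_
          rw [norm_smul, Real.norm_eq_abs]
          exact (mul_le_mul (hj l) (hv l) (norm_nonneg _) hcj.le).trans_eq (mul_one _)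
      _ = _ := by simp
  have hAg : ‖A g‖ ≤ restrNorm A G * ‖g‖ := (A.comp G.subtypeL).le_opNorm ⟨g, hgG⟩
  have hdet : (pairMat A f (Function.update v j g)).det = c j * (pairMat A f v).det := by
    rw [pairMat_update, ← smul_eq_mul, ← Matrix.det_updateCol_sum]
    congr 2
    ext i
    simp [hg, pairMat]
  have hl := laplace_bound (A := A) (E := ⊤) (f := f) (v := Function.update v j g) hf j
    (by simp) (fun l hl => by simpa [hl] using hv l)
  rw [hdet, abs_mul, Function.update_self] at hl
  have hR : 0 ≤ restrNorm A G := norm_nonneg (A.comp G.subtypeL)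
  have hD := detSup_nonneg n A ⊤
  have : |c j| * |(pairMat A f v).det| ≤
      |c j| * ((n + 1 : ℝ) ^ 2 * restrNorm A G * detSup n A ⊤) := by
    calc _ ≤ _ := hl
      _ ≤ (n + 1 : ℝ) * (restrNorm A G * ((n + 1 : ℝ) * |c j|)) * detSup n A ⊤ := by
          gcongr
          exact hAg.trans (by gcongr)
      _ = _ := by ring
  exact le_of_mul_le_mul_left this hcj

/-! ### The Cramer section of a nondegenerate pairing -/

/-- The linear map `b ↦ ∑ j, c j • v j`, where `c` solves `M c = b` for the pairing matrix
`M = (f i (A (v j)))`, written out by Cramer's rule. It is a right inverse of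
`x ↦ (f i (A x))ᵢ` when `det M ≠ 0`. -/
noncomputable def sec {n : ℕ} (A : V →L[ℝ] W) (f : Fin n → W →L[ℝ] ℝ) (v : Fin n → V) :
    (Fin n → ℝ) →ₗ[ℝ] V :=
  (pairMat A f v).det⁻¹ • (Fintype.linearCombination ℝ v ∘ₗ (pairMat A f v).cramer)

lemma sec_apply {n : ℕ} (A : V →L[ℝ] W) (f : Fin n → W →L[ℝ] ℝ) (v : Fin n → V)
    (b : Fin n → ℝ) :
    sec A f v b = (pairMat A f v).det⁻¹ • ∑ j, (pairMat A f v).cramer b j • v j := by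
  simp [sec, Fintype.linearCombination_apply]

lemma pair_sec {n : ℕ} {A : V →L[ℝ] W} {f : Fin n → W →L[ℝ] ℝ} {v : Fin n → V}
    (hM : (pairMat A f v).det ≠ 0) (b : Fin n → ℝ) (i : Fin n) :
    f i (A (sec A f v b)) = b i := by
  have h := congrFun (Matrix.mulVec_cramer (pairMat A f v) b) i
  have h2 : ∑ j, (pairMat A f v).cramer b j * f i (A (v j)) = (pairMat A f v).det * b i := by
    rw [← smul_eq_mul (a := (pairMat A f v).det), ← Pi.smul_apply, ← h]
    simp [Matrix.mulVec, dotProduct, pairMat, mul_comm]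
  simp only [sec_apply, map_smul, map_sum, smul_eq_mul, h2]
  field_simp

lemma sec_mem {n : ℕ} {A : V →L[ℝ] W} {E : Submodule ℝ V} {f : Fin n → W →L[ℝ] ℝ}
    {v : Fin n → V} (hE : ∀ j, v j ∈ E) (b : Fin n → ℝ) : sec A f v b ∈ E := by
  rw [sec_apply]
  exact E.smul_mem _ (E.sum_mem fun j _ => E.smul_mem _ (hE j))

lemma sec_pair {n : ℕ} {A : V →L[ℝ] W} {E : Submodule ℝ V} [FiniteDimensional ℝ E]
    (hn : Module.finrank ℝ E = n) {f : Fin n → W →L[ℝ] ℝ} {v : Fin n → V}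
    (hM : (pairMat A f v).det ≠ 0) (hE : ∀ j, v j ∈ E) {x : V} (hx : x ∈ E) :
    sec A f v (fun i => f i (A x)) = x := by
  have hinj : Function.Injective ((sec A f v).codRestrict E (sec_mem hE)) := by
    intro b b' h
    have h' : sec A f v b = sec A f v b' := congrArg Subtype.val h
    ext i
    rw [← pair_sec hM b i, ← pair_sec hM b' i, h']
  have hsurj := (LinearMap.injective_iff_surjective_of_finrank_eq_finrank
    (f := (sec A f v).codRestrict E (sec_mem hE)) (by simp [hn])).1 hinj
  obtain ⟨b, hb⟩ := hsurj ⟨x, hx⟩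
  have hb' : sec A f v b = x := congrArg Subtype.val hb
  rw [← hb']
  simp only [pair_sec hM]

lemma norm_sec_le {n : ℕ} {A : V →L[ℝ] W} {f : Fin n → W →L[ℝ] ℝ} {v : Fin n → V}
    (hv : ∀ j, ‖v j‖ ≤ 1) (b : Fin n → ℝ) :
    ‖sec A f v b‖ ≤ |(pairMat A f v).det|⁻¹ * ∑ j, |(pairMat A f v).cramer b j| := by
  rw [sec_apply, norm_smul, norm_inv, Real.norm_eq_abs]
  gcongr
  refine (norm_sum_le _ _).trans (Finset.sum_le_sum fun j _ => ?_)
  rw [norm_smul, Real.norm_eq_abs]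
  exact mul_le_of_le_one_right (abs_nonneg _) (hv j)

/-- Dually to Cramer's rule, the vectors `A (sec eᵢ)` are bounded since each value `g (A (sec eᵢ))`
is the quotient of the determinant with row `i` replaced by `g` and the original one. -/
lemma norm_A_sec_le {n : ℕ} {A : V →L[ℝ] W} {E : Submodule ℝ V} {f : Fin n → W →L[ℝ] ℝ}
    {v : Fin n → V} (hf : ∀ i, ‖f i‖ ≤ 1) (hE : ∀ j, v j ∈ E) (hv : ∀ j, ‖v j‖ ≤ 1)
    (b : Fin n → ℝ) :
    ‖A (sec A f v b)‖ ≤ |(pairMat A f v).det|⁻¹ * detSup n A E * ∑ i, |b i| := by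
  have hD := detSup_nonneg n A E
  refine NormedSpace.norm_le_dual_bound ℝ _ (by positivity) fun g => ?_
  set M := pairMat A f v with hMdef
  set r : Fin n → ℝ := fun j => g (A (v j)) with hr
  have h1 : g (A (sec A f v b)) = M.det⁻¹ * ∑ i, (M.updateRow i r).det * b i := by
    have e1 : ∑ j, M.cramer b j * r j = r ⬝ᵥ (M.adjugate.mulVec b) := by
      rw [← Matrix.cramer_eq_adjugate_mulVec]
      simp [dotProduct, mul_comm]
    have e2 : ∑ i, (M.updateRow i r).det * b i = (Matrix.vecMul r M.adjugate) ⬝ᵥ b := by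
      rw [← Matrix.mulVec_transpose, Matrix.adjugate_transpose,
        ← Matrix.cramer_eq_adjugate_mulVec]
      simp [dotProduct, Matrix.cramer_transpose_apply]
    rw [e2, ← Matrix.dotProduct_mulVec, ← e1, sec_apply]
    simp [hr, hMdef]
  rw [h1, norm_mul, norm_inv, Real.norm_eq_abs, Real.norm_eq_abs, mul_assoc, mul_assoc]
  gcongr
  calc |∑ i, (M.updateRow i r).det * b i| ≤ ∑ i, |(M.updateRow i r).det * b i| :=
        Finset.abs_sum_le_sum_abs _ _
    _ ≤ ∑ i, (detSup n A E * ‖g‖) * |b i| := by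
        refine Finset.sum_le_sum fun i _ => ?_
        rw [abs_mul]
        gcongr
        exact abs_det_updateRow_le hf hE hv i g
    _ = detSup n A E * ((∑ i, |b i|) * ‖g‖) := by
        rw [← Finset.mul_sum]; ring

lemma closedCodim_ker {n : ℕ} {A : V →L[ℝ] W} {f : Fin n → W →L[ℝ] ℝ} {v : Fin n → V}
    (hM : (pairMat A f v).det ≠ 0) :
    ClosedCodim (LinearMap.ker ((ContinuousLinearMap.pi f).comp A).toLinearMap) n := by
  have hs : Function.Surjective ((ContinuousLinearMap.pi f).comp A).toLinearMap := by
    intro b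
    refine ⟨sec A f v b, ?_⟩
    ext i
    simp [pair_sec hM]
  have e := LinearMap.quotKerEquivOfSurjective _ hs
  refine ⟨((ContinuousLinearMap.pi f).comp A).isClosed_ker, e.symm.finiteDimensional, ?_⟩
  rw [e.finrank_eq]; simp

lemma closedCodim_ker' {n : ℕ} {A : V →L[ℝ] W} {f : Fin n → W →L[ℝ] ℝ} {v : Fin n → V}
    (hM : (pairMat A f v).det ≠ 0) :
    ClosedCodim (LinearMap.ker (ContinuousLinearMap.pi f).toLinearMap) n := by
  have hs : Function.Surjective (ContinuousLinearMap.pi f).toLinearMap := by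
    intro b
    refine ⟨A (sec A f v b), ?_⟩
    ext i
    simp [pair_sec hM]
  have e := LinearMap.quotKerEquivOfSurjective _ hs
  refine ⟨(ContinuousLinearMap.pi f).isClosed_ker, e.symm.finiteDimensional, ?_⟩
  rw [e.finrank_eq]; simp

lemma restrNorm_ker_le {n : ℕ} {A : V →L[ℝ] W} {f : Fin n → W →L[ℝ] ℝ} {v : Fin n → V}
    (hM : (pairMat A f v).det ≠ 0) (hf : ∀ i, ‖f i‖ ≤ 1) (hv : ∀ j, ‖v j‖ ≤ 1) :
    restrNorm A (LinearMap.ker ((ContinuousLinearMap.pi f).comp A).toLinearMap) ≤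
      detSup (n + 1) A ⊤ / |(pairMat A f v).det| := by
  have hpos := abs_pos.2 hM
  refine ContinuousLinearMap.opNorm_le_bound _
    (div_nonneg (detSup_nonneg _ _ _) hpos.le) fun x => ?_
  have hx : ∀ i, f i (A (x : V)) = 0 := fun i => congrFun (LinearMap.mem_ker.1 x.2) i
  have := det_mul_norm_le hf hv hx
  rw [div_mul_eq_mul_div, le_div_iff₀ hpos, mul_comm]
  exact this

lemma bddBelow_gelfand (n : ℕ) (A : V →L[ℝ] W) :
    BddBelow {r : ℝ | ∃ F : Submodule ℝ V, ClosedCodim F n ∧ r = restrNorm A F} := by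
  refine ⟨0, ?_⟩
  rintro r ⟨F, -, rfl⟩
  exact norm_nonneg (A.comp F.subtypeL)

lemma detSup_mul_gelfand_le (n : ℕ) (A : V →L[ℝ] W) :
    detSup n A ⊤ * gelfand (n + 1) A ≤ detSup (n + 1) A ⊤ := by
  have hc : 0 ≤ gelfand (n + 1) A := by
    refine Real.sInf_nonneg ?_
    rintro r ⟨F, -, rfl⟩
    exact norm_nonneg (A.comp F.subtypeL)
  rcases hc.eq_or_lt with hc0 | hcpos
  · rw [← hc0, mul_zero]; exact detSup_nonneg _ _ _
  rw [← le_div_iff₀ hcpos]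
  refine detSup_le fun f v hf _ hv => ?_
  rw [le_div_iff₀ hcpos]
  rcases eq_or_ne (pairMat A f v).det 0 with h0 | h0
  · rw [h0]; simpa using detSup_nonneg _ _ _
  have h1 : gelfand (n + 1) A ≤ detSup (n + 1) A ⊤ / |(pairMat A f v).det| :=
    (csInf_le (bddBelow_gelfand n A) ⟨_, closedCodim_ker h0, rfl⟩).trans
      (restrNorm_ker_le h0 hf hv)
  rw [le_div_iff₀ (abs_pos.2 h0)] at h1
  linarith

lemma detSup_succ_le_gelfand {n : ℕ} {A : V →L[ℝ] W} (hD : 0 < detSup n A ⊤)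
    (hex : ∃ F : Submodule ℝ V, ClosedCodim F n) :
    detSup (n + 1) A ⊤ ≤ (n + 1 : ℝ) ^ 2 * gelfand (n + 1) A * detSup n A ⊤ := by
  have h : detSup (n + 1) A ⊤ / ((n + 1 : ℝ) ^ 2 * detSup n A ⊤) ≤ gelfand (n + 1) A := by
    obtain ⟨F, hF⟩ := hex
    refine le_csInf ⟨_, F, hF, rfl⟩ ?_
    rintro r ⟨G, hG, rfl⟩
    rw [div_le_iff₀ (by positivity)]
    refine (detSup_succ_le (n := n) hG).trans_eq ?_
    ring
  rw [div_le_iff₀ (by positivity)] at h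
  refine h.trans_eq ?_
  ring

/-- Writing a unit vector `x` of `E` in the basis `v` by Cramer's rule, some coefficient is at
least `1 / (n + 1)`; the corresponding determinant has the small column `A x`. -/
lemma abs_det_le_of_unit {n : ℕ} {A : V →L[ℝ] W} {E : Submodule ℝ V} [FiniteDimensional ℝ E]
    (hn : Module.finrank ℝ E = n + 1) {f : Fin (n + 1) → W →L[ℝ] ℝ} {v : Fin (n + 1) → V}
    (hM : (pairMat A f v).det ≠ 0) (hf : ∀ i, ‖f i‖ ≤ 1) (hE : ∀ j, v j ∈ E)
    (hv : ∀ j, ‖v j‖ ≤ 1) {x : V} (hx : x ∈ E) (hx1 : ‖x‖ = 1) :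
    |(pairMat A f v).det| ≤ (n + 1 : ℝ) ^ 2 * ‖A x‖ * detSup n A ⊤ := by
  have h := norm_sec_le (A := A) (f := f) hv (fun i => f i (A x))
  have hpos := abs_pos.2 hM
  rw [sec_pair hn hM hE hx, hx1, inv_mul_eq_div, le_div_iff₀ hpos, one_mul] at h
  refine h.trans ?_
  have : ∀ j ∈ (Finset.univ : Finset (Fin (n + 1))),
      |(pairMat A f v).cramer (fun i => f i (A x)) j| ≤ (n + 1 : ℝ) * ‖A x‖ * detSup n A ⊤ := by
    intro j _
    rw [Matrix.cramer_apply, ← pairMat_update]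
    have := laplace_bound (A := A) (E := ⊤) (f := f) (v := Function.update v j x) hf j
      (by simp) (fun l hl => by simpa [hl] using hv l)
    simpa using this
  refine (Finset.sum_le_sum this).trans_eq ?_
  simp
  ring

/-! ### Comparison with the volume determinant -/


/-- The value of `detOn` does not depend on the chosen coordinates. -/
lemma detOn_eq {n : ℕ} {A : V →L[ℝ] W} {E : Submodule ℝ V} (hn : Module.finrank ℝ E = n)
    (φ : (E.map A.toLinearMap) ≃ₗ[ℝ] (Fin n → ℝ)) :
    detOn A E =
      (volume (φ '' {w : E.map A.toLinearMap | ∃ v ∈ E, ‖v‖ ≤ 1 ∧ A v = (w : W)})).toReal /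
        (volume (φ '' {w : E.map A.toLinearMap | ‖(w : W)‖ ≤ 1})).toReal := by
  subst hn
  have h : Nonempty ((E.map A.toLinearMap) ≃ₗ[ℝ] (Fin (Module.finrank ℝ E) → ℝ)) := ⟨φ⟩
  rw [detOn, dif_pos h]
  set ψ := h.some
  set L := φ.symm.trans ψ
  have himg : ∀ s : Set (E.map A.toLinearMap), ψ '' s = (L : _ →ₗ[ℝ] _) '' (φ '' s) := by
    intro s
    rw [← Set.image_comp]
    refine Set.image_congr fun x _ => ?_
    simp [L]
  have hL : |LinearMap.det (L : (Fin (Module.finrank ℝ E) → ℝ) →ₗ[ℝ] _)| ≠ 0 :=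
    abs_ne_zero.2 L.isUnit_det'.ne_zero
  rw [himg, himg, Measure.addHaar_image_linearMap, Measure.addHaar_image_linearMap,
    ENNReal.toReal_mul, ENNReal.toReal_mul, ENNReal.toReal_ofReal (abs_nonneg _),
    mul_div_mul_left _ _ hL]

open scoped Pointwise in
lemma detOn_le_pow (A : V →L[ℝ] W) (E : Submodule ℝ V) :
    detOn A E ≤ (‖A‖ + 1) ^ Module.finrank ℝ E := by
  by_cases h : Nonempty ((E.map A.toLinearMap) ≃ₗ[ℝ] (Fin (Module.finrank ℝ E) → ℝ))
  swap
  · rw [detOn, dif_neg h]; positivity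
  obtain ⟨φ⟩ := h
  rw [detOn_eq rfl φ]
  set S₁ := φ '' {w : E.map A.toLinearMap | ∃ v ∈ E, ‖v‖ ≤ 1 ∧ A v = (w : W)}
  set S₂ := φ '' {w : E.map A.toLinearMap | ‖(w : W)‖ ≤ 1}
  have hpos : 0 < ‖A‖ + 1 := by positivity
  have hsub : S₁ ⊆ (‖A‖ + 1) • S₂ := by
    rintro _ ⟨w, ⟨v, hvE, hv, hw⟩, rfl⟩
    refine ⟨φ ((‖A‖ + 1)⁻¹ • w), ⟨_, ?_, rfl⟩, ?_⟩
    · have : ‖(w : W)‖ ≤ ‖A‖ + 1 := by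
        rw [← hw]
        exact (A.le_opNorm_of_le hv).trans (by simp)
      simp only [Set.mem_ofPred_eq, Submodule.coe_smul, norm_smul, norm_inv, Real.norm_eq_abs,
        abs_of_pos hpos]
      rw [inv_mul_le_iff₀ hpos]; simpa using this
    · simp [smul_smul, hpos.ne']
  have hvol : volume S₁ ≤ ENNReal.ofReal ((‖A‖ + 1) ^ Module.finrank ℝ E) * volume S₂ := by
    refine (measure_mono hsub).trans_eq ?_
    rw [Measure.addHaar_smul_of_nonneg _ hpos.le]
    simp
  -- If `volume S₂` is `0` or `∞`, the quotient is the junk value `0`.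
  rcases eq_or_ne (volume S₂).toReal 0 with h0 | h0
  · rw [h0, div_zero]; positivity
  have h0' : 0 < (volume S₂).toReal := lt_of_le_of_ne ENNReal.toReal_nonneg h0.symm
  have hfin : volume S₂ ≠ ⊤ := fun h => h0 (by simp [h])
  rw [div_le_iff₀ h0']
  have := ENNReal.toReal_mono (ENNReal.mul_ne_top ENNReal.ofReal_ne_top hfin) hvol
  rwa [ENNReal.toReal_mul, ENNReal.toReal_ofReal (by positivity)] at this

lemma detOn_le_volGrowth {n : ℕ} (A : V →L[ℝ] W) (E : Submodule ℝ V) [FiniteDimensional ℝ E]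
    (hn : Module.finrank ℝ E = n) : detOn A E ≤ volGrowth n A := by
  refine le_csSup ⟨(‖A‖ + 1) ^ n, ?_⟩ ⟨E, inferInstance, hn, rfl⟩
  rintro r ⟨E', -, hE', rfl⟩
  rw [← hE']
  exact detOn_le_pow A E'

/-- The coordinates `w ↦ (f i w)ᵢ` on `A E`. -/
noncomputable def coordEquiv {n : ℕ} {A : V →L[ℝ] W} {E : Submodule ℝ V} [FiniteDimensional ℝ E]
    (hn : Module.finrank ℝ E = n) {f : Fin n → W →L[ℝ] ℝ} {v : Fin n → V}
    (hM : (pairMat A f v).det ≠ 0) (hE : ∀ j, v j ∈ E) :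
    (E.map A.toLinearMap) ≃ₗ[ℝ] (Fin n → ℝ) where
  toLinearMap := (ContinuousLinearMap.pi f).toLinearMap.domRestrict (E.map A.toLinearMap)
  invFun b := ⟨A (sec A f v b), Submodule.mem_map_of_mem (sec_mem hE b)⟩
  left_inv := by
    rintro ⟨_, x, hx, rfl⟩
    refine Subtype.ext ?_
    exact congrArg A (sec_pair hn hM hE hx)
  right_inv b := by
    ext i
    exact pair_sec hM b i

lemma coordEquiv_apply {n : ℕ} {A : V →L[ℝ] W} {E : Submodule ℝ V} [FiniteDimensional ℝ E]
    (hn : Module.finrank ℝ E = n) {f : Fin n → W →L[ℝ] ℝ} {v : Fin n → V}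
    (hM : (pairMat A f v).det ≠ 0) (hE : ∀ j, v j ∈ E) (w : E.map A.toLinearMap) (i : Fin n) :
    coordEquiv hn hM hE w i = f i w := rfl

lemma volume_mulVec_closedBall {n : ℕ} (M : Matrix (Fin n) (Fin n) ℝ) {r : ℝ} (hr : 0 ≤ r) :
    volume (Matrix.toLin' M '' closedBall 0 r) = ENNReal.ofReal (|M.det| * (2 * r) ^ n) := by
  rw [Measure.addHaar_image_linearMap, Real.volume_pi_closedBall _ hr, LinearMap.det_toLin',
    ENNReal.ofReal_mul (abs_nonneg _)]
  simp

/-- A nearly maximal pairing on `E` bounds `det(A|E)`: in the coordinates `f`, the set `A B_E` lies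
in the image of a cube under the pairing matrix, and the unit ball of `A E` contains a cube. -/
lemma detOn_le {n : ℕ} (hn1 : 1 ≤ n) {A : V →L[ℝ] W} {E : Submodule ℝ V} [FiniteDimensional ℝ E]
    (hn : Module.finrank ℝ E = n) {f : Fin n → W →L[ℝ] ℝ} {v : Fin n → V}
    (hM : (pairMat A f v).det ≠ 0) (hf : ∀ i, ‖f i‖ ≤ 1) (hE : ∀ j, v j ∈ E)
    (hv : ∀ j, ‖v j‖ ≤ 1) (hmax : detSup n A E ≤ 2 * |(pairMat A f v).det|) :
    detOn A E ≤ (4 * n : ℝ) ^ n * |(pairMat A f v).det| := by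
  have hpos := abs_pos.2 hM
  have hn0 : (0 : ℝ) < n := by exact_mod_cast hn1
  rw [detOn_eq hn (coordEquiv hn hM hE)]
  set S₁ := coordEquiv hn hM hE '' {w : E.map A.toLinearMap | ∃ v ∈ E, ‖v‖ ≤ 1 ∧ A v = (w : W)}
  set S₂ := coordEquiv hn hM hE '' {w : E.map A.toLinearMap | ‖(w : W)‖ ≤ 1}
  have h1 : S₁ ⊆ Matrix.toLin' (pairMat A f v) '' closedBall 0 2 := by
    rintro _ ⟨w, ⟨x, hxE, hx, hw⟩, rfl⟩
    refine ⟨(pairMat A f v).det⁻¹ • (pairMat A f v).cramer (fun i => f i (A x)), ?_, ?_⟩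
    · rw [mem_closedBall_zero_iff, pi_norm_le_iff_of_nonneg (by norm_num)]
      intro j
      have hb := abs_det_updateCol_le (A := A) hf hE hv j hxE
      rw [Pi.smul_apply, smul_eq_mul, norm_mul, norm_inv, Real.norm_eq_abs, Real.norm_eq_abs,
        inv_mul_le_iff₀ hpos, Matrix.cramer_apply]
      have hD := detSup_nonneg n A E
      nlinarith [norm_nonneg x]
    · rw [map_smul, Matrix.toLin'_apply, Matrix.mulVec_cramer, smul_smul, inv_mul_cancel₀ hM,
        one_smul]
      ext i
      rw [coordEquiv_apply, hw]
  have h2 : closedBall 0 (1 / (2 * n : ℝ)) ⊆ S₂ := by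
    intro b hb
    rw [mem_closedBall_zero_iff, pi_norm_le_iff_of_nonneg (by positivity)] at hb
    refine ⟨(coordEquiv hn hM hE).symm b, ?_, by simp⟩
    change ‖A (sec A f v b)‖ ≤ 1
    refine (norm_A_sec_le hf hE hv b).trans ?_
    have hsum : ∑ i, |b i| ≤ 1 / 2 := by
      refine (Finset.sum_le_sum fun i _ => hb i).trans_eq ?_
      simp
      field_simp
    have hq : |(pairMat A f v).det|⁻¹ * detSup n A E ≤ 2 := by
      rw [inv_mul_le_iff₀ hpos]; linarith
    have hs0 : 0 ≤ ∑ i, |b i| := Finset.sum_nonneg fun i _ => abs_nonneg _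
    nlinarith
  have hv1 := measure_mono (μ := volume) h1
  rw [volume_mulVec_closedBall _ (by norm_num)] at hv1
  have hv2 := measure_mono (μ := volume) h2
  rw [Real.volume_pi_closedBall _ (by positivity), Fintype.card_fin] at hv2
  have hr1 : (volume S₁).toReal ≤ |(pairMat A f v).det| * (2 * 2) ^ n :=
    ENNReal.toReal_le_of_le_ofReal (by positivity) hv1
  -- An infinite volume of `S₂` would make the quotient `0`.
  rcases eq_or_ne (volume S₂) ⊤ with ht | ht
  · rw [ht]; simp; positivity
  have hr2 : (2 * (1 / (2 * n : ℝ))) ^ n ≤ (volume S₂).toReal :=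
    (ENNReal.ofReal_le_iff_le_toReal ht).1 hv2
  have hc : (2 * (1 / (2 * n : ℝ))) = 1 / n := by field_simp
  rw [hc] at hr2
  have hp : 0 < (1 / n : ℝ) ^ n := by positivity
  rw [div_le_iff₀ (hp.trans_le hr2)]
  calc (volume S₁).toReal ≤ |(pairMat A f v).det| * (2 * 2) ^ n := hr1
    _ = (4 * n : ℝ) ^ n * |(pairMat A f v).det| * (1 / n : ℝ) ^ n := by
        rw [show (4 * n : ℝ) = 2 * 2 * n by ring, mul_pow _ (n : ℝ), one_div, inv_pow]
        field_simp
    _ ≤ _ := by gcongr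

/-- A nonzero pairing determinant with vectors in `E` bounds `det(A|E)` from below: in the
coordinates `f`, the set `A B_E` contains the image of a cube under the pairing matrix, and the
unit ball of `A E` lies in a cube. -/
lemma le_detOn {n : ℕ} (hn1 : 1 ≤ n) {A : V →L[ℝ] W} {E : Submodule ℝ V} [FiniteDimensional ℝ E]
    (hn : Module.finrank ℝ E = n) {f : Fin n → W →L[ℝ] ℝ} {v : Fin n → V}
    (hM : (pairMat A f v).det ≠ 0) (hf : ∀ i, ‖f i‖ ≤ 1) (hE : ∀ j, v j ∈ E)
    (hv : ∀ j, ‖v j‖ ≤ 1) :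
    |(pairMat A f v).det| ≤ (n : ℝ) ^ n * detOn A E := by
  have hn0 : (0 : ℝ) < n := by exact_mod_cast hn1
  rw [detOn_eq hn (coordEquiv hn hM hE)]
  set S₁ := coordEquiv hn hM hE '' {w : E.map A.toLinearMap | ∃ v ∈ E, ‖v‖ ≤ 1 ∧ A v = (w : W)}
    with hS₁
  set S₂ := coordEquiv hn hM hE '' {w : E.map A.toLinearMap | ‖(w : W)‖ ≤ 1} with hS₂
  have h1 : Matrix.toLin' (pairMat A f v) '' closedBall 0 (1 / n : ℝ) ⊆ S₁ := by
    rintro _ ⟨c, hc, rfl⟩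
    rw [mem_closedBall_zero_iff, pi_norm_le_iff_of_nonneg (by positivity)] at hc
    have hxE : ∑ j, c j • v j ∈ E := E.sum_mem fun j _ => E.smul_mem _ (hE j)
    refine ⟨⟨A (∑ j, c j • v j), Submodule.mem_map_of_mem hxE⟩, ⟨_, hxE, ?_, rfl⟩, ?_⟩
    · refine (norm_sum_le _ _).trans ?_
      have : ∀ j ∈ (Finset.univ : Finset (Fin n)), ‖c j • v j‖ ≤ 1 / n := fun j _ => by
        rw [norm_smul]
        exact (mul_le_of_le_one_right (norm_nonneg _) (hv j)).trans (hc j)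
      refine (Finset.sum_le_sum this).trans_eq ?_
      simp
      field_simp
    · ext i
      simp [coordEquiv_apply, Matrix.mulVec, dotProduct, pairMat, mul_comm]
  have h1' : S₁ ⊆ closedBall 0 ‖A‖ := by
    rintro _ ⟨w, ⟨x, hxE, hx, hw⟩, rfl⟩
    rw [mem_closedBall_zero_iff, pi_norm_le_iff_of_nonneg (norm_nonneg _)]
    intro i
    rw [coordEquiv_apply, ← hw]
    refine ((f i).le_of_opNorm_le (hf i) _).trans ?_
    rw [one_mul]
    exact (A.le_opNorm_of_le hx).trans (by simp)
  have h2 : S₂ ⊆ closedBall 0 1 := by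
    rintro _ ⟨w, hw, rfl⟩
    rw [mem_closedBall_zero_iff, pi_norm_le_iff_of_nonneg zero_le_one]
    intro i
    rw [coordEquiv_apply]
    refine ((f i).le_of_opNorm_le (hf i) _).trans ?_
    simpa using hw
  have hS₂pos : 0 < volume S₂ := by
    refine Measure.measure_pos_of_mem_nhds _ (x := 0) ?_
    have hcont : Continuous (coordEquiv hn hM hE).symm :=
      (coordEquiv hn hM hE).symm.toLinearMap.continuous_of_finiteDimensional
    have hpre : S₂ = (coordEquiv hn hM hE).symm ⁻¹' closedBall 0 1 := by
      rw [hS₂, LinearEquiv.image_eq_preimage_symm]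
      congr 1
      ext w
      simp
    rw [hpre]
    exact hcont.continuousAt.preimage_mem_nhds (by
      rw [map_zero]; exact closedBall_mem_nhds _ one_pos)
  have hv1 := measure_mono (μ := volume) h1
  rw [volume_mulVec_closedBall _ (by positivity)] at hv1
  have hfin1 : volume S₁ ≠ ⊤ :=
    ((measure_mono h1').trans_lt (isCompact_closedBall _ _).measure_lt_top).ne
  have hv2 := measure_mono (μ := volume) h2
  have hfin2 : volume S₂ ≠ ⊤ := (hv2.trans_lt (isCompact_closedBall _ _).measure_lt_top).ne
  rw [Real.volume_pi_closedBall _ zero_le_one, Fintype.card_fin] at hv2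
  have hr1 := (ENNReal.ofReal_le_iff_le_toReal hfin1).1 hv1
  have hr2 : (volume S₂).toReal ≤ (2 * 1) ^ n :=
    ENNReal.toReal_le_of_le_ofReal (by positivity) hv2
  have hp := ENNReal.toReal_pos hS₂pos.ne' hfin2
  rw [← mul_div_assoc, le_div_iff₀ hp]
  calc |(pairMat A f v).det| * (volume S₂).toReal ≤ |(pairMat A f v).det| * (2 * 1) ^ n := by
        gcongr
    _ = (n : ℝ) ^ n * (|(pairMat A f v).det| * (2 * (1 / n : ℝ)) ^ n) := by
        rw [mul_one, mul_one_div, div_pow]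
        field_simp
    _ ≤ _ := by gcongr

lemma detSup_le_volGrowth {n : ℕ} (hn1 : 1 ≤ n) (A : V →L[ℝ] W) :
    detSup n A ⊤ ≤ (n : ℝ) ^ n * volGrowth n A := by
  have h0 : 0 ≤ volGrowth n A := by
    refine Real.sSup_nonneg ?_
    rintro r ⟨E, -, -, rfl⟩
    unfold detOn
    split_ifs <;> positivity
  refine detSup_le fun f v hf _ hv => ?_
  rcases eq_or_ne (pairMat A f v).det 0 with h | hM
  · rw [h, abs_zero]; positivity
  have hli : LinearIndependent ℝ v := by
    rw [Fintype.linearIndependent_iff]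
    intro c hc
    have hMc : (pairMat A f v).mulVec c = 0 := by
      ext i
      have := congrArg (fun x => f i (A x)) hc
      simpa [Matrix.mulVec, dotProduct, pairMat, mul_comm] using this
    exact congrFun (Matrix.eq_zero_of_mulVec_eq_zero hM hMc)
  have hrank : Module.finrank ℝ (Submodule.span ℝ (Set.range v)) = n := by
    simpa using finrank_span_eq_card hli
  have : FiniteDimensional ℝ (Submodule.span ℝ (Set.range v)) :=
    FiniteDimensional.span_of_finite ℝ (Set.finite_range v)
  refine (le_detOn hn1 hrank hM hf (fun j => Submodule.subset_span ⟨j, rfl⟩) hv).trans ?_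
  gcongr
  exact detOn_le_volGrowth A _ hrank

/-- Independent images `A (x j)` are separated by functionals; after scaling into the unit balls
this yields a nonzero pairing determinant. -/
lemma detSup_pos_of_linearIndependent {n : ℕ} {A : V →L[ℝ] W} {E : Submodule ℝ V} {x : Fin n → V}
    (hx : ∀ j, x j ∈ E) (hli : LinearIndependent ℝ (fun j => A (x j))) : 0 < detSup n A E := by
  set b := Module.Basis.span hli
  have : FiniteDimensional ℝ (Submodule.span ℝ (Set.range fun j => A (x j))) :=
    b.finiteDimensional_of_finite
  obtain ⟨p, hp⟩ := Submodule.ClosedComplemented.of_finiteDimensional (𝕜 := ℝ)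
    (Submodule.span ℝ (Set.range fun j => A (x j)))
  set g : Fin n → W →L[ℝ] ℝ := fun i => (LinearMap.toContinuousLinearMap (b.coord i)).comp p
  have hg : ∀ i j, g i (A (x j)) = if i = j then 1 else 0 := by
    intro i j
    have hmem : A (x j) ∈ Submodule.span ℝ (Set.range fun j => A (x j)) :=
      Submodule.subset_span ⟨j, rfl⟩
    have h1 : p (A (x j)) = b j := by
      rw [hp ⟨_, hmem⟩]
      exact (Module.Basis.span_apply hli j).symm
    simp only [g, ContinuousLinearMap.comp_apply, h1]
    simp [Finsupp.single_apply, eq_comm]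
  set s : ℝ := (1 + ∑ j, ‖x j‖)⁻¹
  set t : ℝ := (1 + ∑ i, ‖g i‖)⁻¹
  have hs : 0 < s := by positivity
  have ht : 0 < t := by positivity
  have hmat : pairMat A (fun i => t • g i) (fun j => s • x j) =
      (t * s) • (1 : Matrix (Fin n) (Fin n) ℝ) := by
    ext i j
    simp [pairMat, hg, Matrix.one_apply, mul_comm]
  have hle := le_detSup (A := A) (E := E) (f := fun i => t • g i) (v := fun j => s • x j)
    (fun i => by
      rw [norm_smul, Real.norm_of_nonneg ht.le, inv_mul_le_iff₀ (by positivity), mul_one]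
      have := Finset.single_le_sum (f := fun i => ‖g i‖) (fun _ _ => norm_nonneg _)
        (Finset.mem_univ i)
      linarith)
    (fun j => E.smul_mem _ (hx j))
    (fun j => by
      rw [norm_smul, Real.norm_of_nonneg hs.le, inv_mul_le_iff₀ (by positivity), mul_one]
      have := Finset.single_le_sum (f := fun j => ‖x j‖) (fun _ _ => norm_nonneg _)
        (Finset.mem_univ j)
      linarith)
  refine lt_of_lt_of_le ?_ hle
  rw [hmat, Matrix.det_smul, Matrix.det_one, mul_one, abs_pos]
  positivity

lemma detSup_pos_of_rank {n : ℕ} {A : V →L[ℝ] W}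
    (h : (n : Cardinal) ≤ LinearMap.rank A.toLinearMap) : 0 < detSup n A ⊤ := by
  obtain ⟨w, hw⟩ := Module.le_rank_iff.1 h
  choose x hx using fun j => (w j).2
  refine detSup_pos_of_linearIndependent (x := x) (by simp) ?_
  have := hw.map' (LinearMap.range A.toLinearMap).subtype (Submodule.ker_subtype _)
  have he : (fun j => A (x j)) = Subtype.val ∘ w := funext hx
  rw [he]
  exact this

lemma detSup_pos_of_detOn {n : ℕ} {A : V →L[ℝ] W} {E : Submodule ℝ V} [FiniteDimensional ℝ E]
    (hn : Module.finrank ℝ E = n) (h : detOn A E ≠ 0) : 0 < detSup n A E := by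
  have hne : Nonempty ((E.map A.toLinearMap) ≃ₗ[ℝ] (Fin (Module.finrank ℝ E) → ℝ)) := by
    by_contra hne
    exact h (by rw [detOn, dif_neg hne])
  obtain ⟨φ⟩ := hne
  set w : Fin n → E.map A.toLinearMap :=
    fun j => φ.symm (Pi.single (Fin.cast hn.symm j) 1)
  have hw : LinearIndependent ℝ w := by
    have h1 := ((Pi.basisFun ℝ (Fin (Module.finrank ℝ E))).map φ.symm).linearIndependent.comp
      (Fin.cast hn.symm) (Fin.cast_injective _)
    have he : w = ((Pi.basisFun ℝ (Fin (Module.finrank ℝ E))).map φ.symm) ∘ Fin.cast hn.symm := by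
      funext j
      simp [w]
    rw [he]
    exact h1
  choose x hxE hx using fun j => (w j).2
  refine detSup_pos_of_linearIndependent (x := x) hxE ?_
  have := hw.map' (E.map A.toLinearMap).subtype (Submodule.ker_subtype _)
  have he : (fun j => A (x j)) = Subtype.val ∘ w := funext hx
  rw [he]
  exact this

/-! ### The splitting -/

/-- The splitting determined by a nearly maximal pairing: `F'` is the common kernel of the
functionals `f i`, `F = A⁻¹ F'`, and the projections are `σ ∘ Φ ∘ A` and `A ∘ σ ∘ Φ`, where
`Φ = (f i)ᵢ` and `σ` is the Cramer section. -/
lemma splitting {n : ℕ} {A : V →L[ℝ] W} {E : Submodule ℝ V} [FiniteDimensional ℝ E]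
    (hn : Module.finrank ℝ E = n + 1) {f : Fin (n + 1) → W →L[ℝ] ℝ} {v : Fin (n + 1) → V}
    (hM : (pairMat A f v).det ≠ 0) (hf : ∀ i, ‖f i‖ ≤ 1) (hE : ∀ j, v j ∈ E)
    (hv : ∀ j, ‖v j‖ ≤ 1) (hmaxE : detSup (n + 1) A E ≤ 2 * |(pairMat A f v).det|)
    {K C : ℝ} (hK : 2 ≤ K) (hmax : detSup (n + 1) A ⊤ ≤ K * |(pairMat A f v).det|)
    (hC : C = (n + 2 : ℝ) ^ 2 * K) :
    ∃ F : Submodule ℝ V, ∃ F' : Submodule ℝ W,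
      ClosedCodim F (n + 1) ∧ IsCompl E F ∧
      ClosedCodim F' (n + 1) ∧ IsCompl (E.map A.toLinearMap) F' ∧
      F.map A.toLinearMap ≤ F' ∧
      C⁻¹ * gelfand (n + 1) A ≤ minNorm A E ∧
      restrNorm A F ≤ C * gelfand (n + 1 + 1) A ∧
      (∃ π, IsProjOn π E F ∧ ‖π‖ ≤ C) ∧
      (∃ π', IsProjOn π' (E.map A.toLinearMap) F' ∧ ‖π'‖ ≤ C) := by
  have hpos := abs_pos.2 hM
  have hn0 : (0 : ℝ) ≤ n := Nat.cast_nonneg n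
  have hDtop : 0 < detSup (n + 1) A ⊤ := hpos.trans_le (le_detSup hf (by simp) hv)
  have hCpos : 0 < C := by rw [hC]; positivity
  set Φ : W →L[ℝ] (Fin (n + 1) → ℝ) := ContinuousLinearMap.pi f with hΦ
  set σ : (Fin (n + 1) → ℝ) →L[ℝ] V := LinearMap.toContinuousLinearMap (sec A f v) with hσ
  have hΦσ : ∀ b, Φ (A (σ b)) = b := fun b => funext fun i => pair_sec hM b i
  have hσΦ : ∀ x ∈ E, σ (Φ (A x)) = x := fun x hx => sec_pair hn hM hE hx
  have hσE : ∀ b, σ b ∈ E := fun b => sec_mem hE b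
  refine ⟨LinearMap.ker (Φ.comp A).toLinearMap, LinearMap.ker Φ.toLinearMap, closedCodim_ker hM,
    ?_, closedCodim_ker' hM, ?_, ?_, ?_, ?_, ⟨(σ.comp Φ).comp A, ⟨?_, ?_⟩, ?_⟩,
    ⟨(A.comp σ).comp Φ, ⟨?_, ?_⟩, ?_⟩⟩
  · constructor
    · rw [Submodule.disjoint_def]
      intro x hx hx'
      have hx0 : Φ (A x) = 0 := hx'
      rw [← hσΦ x hx, hx0, map_zero]
    · rw [codisjoint_iff, eq_top_iff]
      intro x _
      refine Submodule.mem_sup.2 ⟨σ (Φ (A x)), hσE _, x - σ (Φ (A x)), ?_, by abel⟩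
      change Φ (A (x - σ (Φ (A x)))) = 0
      rw [map_sub, map_sub, hΦσ, sub_self]
  · constructor
    · rw [Submodule.disjoint_def]
      rintro _ ⟨x, hx, rfl⟩ hx'
      have hx0 : Φ (A x) = 0 := hx'
      have : x = 0 := by rw [← hσΦ x hx, hx0, map_zero]
      simp [this]
    · rw [codisjoint_iff, eq_top_iff]
      intro w _
      refine Submodule.mem_sup.2 ⟨A (σ (Φ w)), Submodule.mem_map_of_mem (hσE _),
        w - A (σ (Φ w)), ?_, by abel⟩
      change Φ (w - A (σ (Φ w))) = 0
      rw [map_sub, hΦσ, sub_self]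
  · rintro _ ⟨x, hx, rfl⟩
    exact hx
  · have hne : ∃ x ∈ E, ‖x‖ = 1 := by
      have : Nontrivial E := Module.nontrivial_of_finrank_pos (R := ℝ) (by omega)
      obtain ⟨x, hx⟩ := exists_norm_eq E (zero_le_one (α := ℝ))
      exact ⟨x, x.2, hx⟩
    obtain ⟨x₀, hx₀, hx₀1⟩ := hne
    refine le_csInf ⟨_, x₀, hx₀, hx₀1, rfl⟩ ?_
    rintro _ ⟨x, hx, hx1, rfl⟩
    have h1 := abs_det_le_of_unit hn hM hf hE hv hx hx1
    have h2 := detSup_mul_gelfand_le n A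
    have hDn : 0 < detSup n A ⊤ := by
      rcases (detSup_nonneg n A ⊤).eq_or_lt with h | h
      · rw [← h, mul_zero] at h1; linarith
      · exact h
    have h3 : detSup n A ⊤ * gelfand (n + 1) A ≤ detSup n A ⊤ * (C * ‖A x‖) := by
      calc _ ≤ K * |(pairMat A f v).det| := h2.trans hmax
        _ ≤ K * ((n + 1 : ℝ) ^ 2 * ‖A x‖ * detSup n A ⊤) := by gcongr
        _ ≤ K * ((n + 2 : ℝ) ^ 2 * ‖A x‖ * detSup n A ⊤) := by gcongr; norm_num
        _ = _ := by rw [hC]; ring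
    rw [inv_mul_le_iff₀ hCpos]
    exact le_of_mul_le_mul_left h3 hDn
  · have h1 := restrNorm_ker_le hM hf hv
    refine h1.trans ?_
    rw [div_le_iff₀ hpos]
    have h2 := detSup_succ_le_gelfand hDtop ⟨_, closedCodim_ker hM⟩
    have hc : 0 ≤ gelfand (n + 1 + 1) A := by
      refine Real.sInf_nonneg ?_
      rintro r ⟨F, -, rfl⟩
      exact norm_nonneg (A.comp F.subtypeL)
    calc _ ≤ _ := h2
      _ ≤ ((n + 1 : ℕ) + 1 : ℝ) ^ 2 * gelfand (n + 1 + 1) A *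
          (K * |(pairMat A f v).det|) := by gcongr
      _ = _ := by rw [hC]; push_cast; ring
  · intro x hx
    exact hσΦ x hx
  · intro x hx
    have hx0 : Φ (A x) = 0 := hx
    change σ (Φ (A x)) = 0
    rw [hx0, map_zero]
  · refine ContinuousLinearMap.opNorm_le_bound _ hCpos.le fun x => ?_
    change ‖sec A f v (fun i => f i (A x))‖ ≤ _
    refine (norm_sec_le hv _).trans ?_
    rw [inv_mul_le_iff₀ hpos]
    have : ∀ j ∈ (Finset.univ : Finset (Fin (n + 1))),
        |(pairMat A f v).cramer (fun i => f i (A x)) j| ≤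
          K * |(pairMat A f v).det| * ‖x‖ := fun j _ => by
      rw [Matrix.cramer_apply]
      refine (abs_det_updateCol_le (E := ⊤) hf (by simp) hv j (x := x) trivial).trans ?_
      gcongr
    refine (Finset.sum_le_sum this).trans ?_
    rw [Finset.sum_const, Finset.card_univ, Fintype.card_fin, nsmul_eq_mul, hC]
    push_cast
    have : (n + 1 : ℝ) ≤ (n + 2) ^ 2 := by nlinarith
    calc (n + 1 : ℝ) * (K * |(pairMat A f v).det| * ‖x‖)
        ≤ (n + 2 : ℝ) ^ 2 * (K * |(pairMat A f v).det| * ‖x‖) := by gcongr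
      _ = _ := by ring
  · rintro _ ⟨x, hx, rfl⟩
    exact congrArg A (hσΦ x hx)
  · intro w hw
    have hw0 : Φ w = 0 := hw
    change A (σ (Φ w)) = 0
    rw [hw0, map_zero, map_zero]
  · refine ContinuousLinearMap.opNorm_le_bound _ hCpos.le fun w => ?_
    change ‖A (sec A f v (fun i => f i w))‖ ≤ _
    refine (norm_A_sec_le hf hE hv _).trans ?_
    have h1 : |(pairMat A f v).det|⁻¹ * detSup (n + 1) A E ≤ 2 := by
      rw [inv_mul_le_iff₀ hpos]; linarith
    have h2 : ∑ i, |f i w| ≤ (n + 1 : ℝ) * ‖w‖ := by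
      have : ∀ i ∈ (Finset.univ : Finset (Fin (n + 1))), |f i w| ≤ ‖w‖ := fun i _ => by
        simpa using (f i).le_of_opNorm_le (hf i) w
      refine (Finset.sum_le_sum this).trans_eq ?_
      simp
    have h3 : 2 * (n + 1 : ℝ) ≤ C := by rw [hC]; nlinarith
    calc _ ≤ 2 * ((n + 1 : ℝ) * ‖w‖) := by gcongr
      _ = 2 * (n + 1 : ℝ) * ‖w‖ := by ring
      _ ≤ C * ‖w‖ := by gcongr

end SVSplit

/-- **Corollary 2.11 (singular value splitting for Banach space operators).** -/
theorem singular_value_splitting :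
    ∀ k : ℕ, 1 ≤ k →
    ∃ C : ℝ, 1 < C ∧
    ∀ (V : Type u) (W : Type v),
    ∀ (_ : NormedAddCommGroup V) (_ : NormedSpace ℝ V) (_ : CompleteSpace V)
      (_ : NormedAddCommGroup W) (_ : NormedSpace ℝ W) (_ : CompleteSpace W),
    ∀ (A : V →L[ℝ] W) (E : Submodule ℝ V),
      (k : Cardinal) ≤ LinearMap.rank A.toLinearMap →
      FiniteDimensional ℝ ↥E → Module.finrank ℝ ↥E = k →
      (1/2 : ℝ) * volGrowth k A ≤ detOn A E →
      ∃ F : Submodule ℝ V, ∃ F' : Submodule ℝ W,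
        ClosedCodim F k ∧ IsCompl E F ∧
        ClosedCodim F' k ∧ IsCompl (E.map A.toLinearMap) F' ∧
        F.map A.toLinearMap ≤ F' ∧
        C⁻¹ * gelfand k A ≤ minNorm A E ∧
        restrNorm A F ≤ C * gelfand (k+1) A ∧
        (∃ π, IsProjOn π E F ∧ ‖π‖ ≤ C) ∧
        (∃ π', IsProjOn π' (E.map A.toLinearMap) F' ∧ ‖π'‖ ≤ C) := by
  intro k hk
  obtain ⟨n, rfl⟩ : ∃ n, k = n + 1 := ⟨k - 1, by omega⟩
  -- `detSup ≤ k ^ k * V_k ≤ 2 * k ^ k * det(A|E) ≤ K * |det M|` for a nearly maximal pairing `M`.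
  set K : ℝ := 2 * ((n + 1 : ℕ) : ℝ) ^ (n + 1) * (4 * ((n + 1 : ℕ) : ℝ)) ^ (n + 1) with hKdef
  have hk1 : (1 : ℝ) ≤ ((n + 1 : ℕ) : ℝ) := by exact_mod_cast hk
  have hK : 2 ≤ K := by
    have h1 : (1 : ℝ) ≤ ((n + 1 : ℕ) : ℝ) ^ (n + 1) := one_le_pow₀ hk1
    have h2 : (1 : ℝ) ≤ (4 * ((n + 1 : ℕ) : ℝ)) ^ (n + 1) := one_le_pow₀ (by linarith)
    nlinarith [mul_le_mul h1 h2 zero_le_one (by linarith)]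
  refine ⟨(n + 2 : ℝ) ^ 2 * K, ?_, ?_⟩
  · have : (0 : ℝ) ≤ n := Nat.cast_nonneg n
    nlinarith [sq_nonneg (n : ℝ)]
  intro V W _ _ _ _ _ _ A E hrank _ hdim hvol
  have hD := SVSplit.detSup_pos_of_rank hrank
  have hDV := SVSplit.detSup_le_volGrowth hk A
  have hp : (0 : ℝ) < ((n + 1 : ℕ) : ℝ) ^ (n + 1) := by positivity
  have hVpos : 0 < volGrowth (n + 1) A := by
    by_contra h
    nlinarith
  have hdet : 0 < detOn A E := by linarith
  have hDE := SVSplit.detSup_pos_of_detOn hdim hdet.ne'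
  obtain ⟨_, ⟨f, v, hf, hv, rfl⟩, hlt⟩ :=
    exists_lt_of_lt_csSup (SVSplit.detSet_nonempty (n + 1) A E) (half_lt_self hDE)
  change SVSplit.detSup (n + 1) A E / 2 < _ at hlt
  have hM : (SVSplit.pairMat A f v).det ≠ 0 := by
    intro h
    rw [h, abs_zero] at hlt
    linarith
  have hmaxE : SVSplit.detSup (n + 1) A E ≤ 2 * |(SVSplit.pairMat A f v).det| := by
    linarith
  have hup := SVSplit.detOn_le hk hdim hM hf (fun j => (hv j).1) (fun j => (hv j).2) hmaxE
  refine SVSplit.splitting hdim hM hf (fun j => (hv j).1) (fun j => (hv j).2) hmaxE hK ?_ rfl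
  calc SVSplit.detSup (n + 1) A ⊤ ≤ ((n + 1 : ℕ) : ℝ) ^ (n + 1) * volGrowth (n + 1) A := hDV
    _ ≤ ((n + 1 : ℕ) : ℝ) ^ (n + 1) *
        (2 * ((4 * ((n + 1 : ℕ) : ℝ)) ^ (n + 1) * |(SVSplit.pairMat A f v).det|)) := by
        gcongr
        linarith
    _ = K * |(SVSplit.pairMat A f v).det| := by rw [hKdef]; ring
end
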